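/- arXiv:math/0606675 — 4 statements merged into one kernel-verified Lean document; each statement's English description precedes it below -/
import Mathlib

section
/- Let n ≥ 1, k ≥ 1 and let Ω ⊂ ℝ^{n+1} be a bounded open set. Then there exists a constant C, depending only on n, k and the diameter of Ω, such that for every ε ∈ (0,1] and every solution u of the regularised level-set equation (★★)_ε on Ω one has sup_Ω |u| ≤ C. -/
open MeasureTheory Metric Set

/-- The divergence of a vector field `F` on `ℝ^{n+1}`: the trace of its Fréchet derivative. -/
noncomputable def vdiv {n : ℕ}
    (F : EuclideanSpace ℝ (Fin (n + 1)) → EuclideanSpace ℝ (Fin (n + 1)))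
    (x : EuclideanSpace ℝ (Fin (n + 1))) : ℝ :=
  LinearMap.trace ℝ (EuclideanSpace ℝ (Fin (n + 1)))
    (fderiv ℝ F x : EuclideanSpace ℝ (Fin (n + 1)) →ₗ[ℝ] EuclideanSpace ℝ (Fin (n + 1)))

/-- The gradient of `u`, computed within the closure of `Ω` (so that it also represents
the continuous extension of the gradient up to the boundary of `Ω`). -/
noncomputable def gradC {n : ℕ} (Ω : Set (EuclideanSpace ℝ (Fin (n + 1))))
    (u : EuclideanSpace ℝ (Fin (n + 1)) → ℝ)
    (x : EuclideanSpace ℝ (Fin (n + 1))) : EuclideanSpace ℝ (Fin (n + 1)) :=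
  (InnerProductSpace.toDual ℝ (EuclideanSpace ℝ (Fin (n + 1)))).symm
    (fderivWithin ℝ u (closure Ω) x)

/-- `u` is a solution of the regularised level-set equation `(★★)_ε` on `Ω`:
it is smooth on the closure of `Ω`, satisfies
`div(∇u/√(ε² + |∇u|²)) = −(ε² + |∇u|²)^{−1/(2k)}` in `Ω`, and vanishes on `∂Ω`. -/
def IsRegularizedSolution (n : ℕ) (k ε : ℝ) (Ω : Set (EuclideanSpace ℝ (Fin (n + 1))))
    (u : EuclideanSpace ℝ (Fin (n + 1)) → ℝ) : Prop :=
  ContDiffOn ℝ (⊤ : ℕ∞) u (closure Ω) ∧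
  (∀ x ∈ Ω,
    vdiv (fun y => (Real.sqrt (ε ^ 2 + ‖gradC Ω u y‖ ^ 2))⁻¹ • gradC Ω u y) x
      = -((ε ^ 2 + ‖gradC Ω u x‖ ^ 2) ^ (-(1 : ℝ) / (2 * k)))) ∧
  (∀ x ∈ frontier Ω, u x = 0)

open Topology Filter in
/-- Second-order necessary condition at a local maximum. -/
theorem IsLocalMax.inner_hasFDerivAt_gradient_nonpos {E : Type*} [NormedAddCommGroup E]
    [InnerProductSpace ℝ E] {w : E → ℝ} {G : E → E} {H : E →L[ℝ] E} {x : E}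
    (hw : ∀ᶠ y in 𝓝 x, HasFDerivAt w (innerSL ℝ (G y)) y) (hG : HasFDerivAt G H x)
    (hmax : IsLocalMax w x) (h : E) : inner ℝ (H h) h ≤ 0 := by
  by_contra! hpos
  have hline : ∀ t : ℝ, HasDerivAt (fun t : ℝ => x + t • h) h t := fun t => by
    simpa using ((hasDerivAt_id t).smul_const h).const_add x
  have hx0 : x + (0 : ℝ) • h = x := by simp
  have hcont : Tendsto (fun t : ℝ => x + t • h) (𝓝 0) (𝓝 x) := by
    have := (hline 0).continuousAt.tendsto
    rwa [hx0] at this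
  have hd : ∀ᶠ t in 𝓝 (0 : ℝ),
      HasDerivAt (fun t : ℝ => w (x + t • h)) (inner ℝ (G (x + t • h)) h) t := by
    filter_upwards [hcont.eventually hw] with t ht
    exact ht.comp_hasDerivAt t (hline t)
  have hd' : deriv (fun t : ℝ => w (x + t • h)) =ᶠ[𝓝 0] fun t => inner ℝ (G (x + t • h)) h :=
    hd.mono fun t ht => ht.deriv
  have hdd : HasDerivAt (fun t : ℝ => inner ℝ (G (x + t • h)) h) (inner ℝ (H h) h) 0 := by
    have h1 : HasDerivAt (fun t : ℝ => G (x + t • h)) (H h) 0 := by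
      rw [← hx0] at hG
      exact hG.comp_hasDerivAt 0 (hline 0)
    simpa using h1.inner ℝ (hasDerivAt_const (0 : ℝ) h)
  have hmax' : IsLocalMax (fun t : ℝ => w (x + t • h)) 0 := by
    have := hcont.eventually hmax
    filter_upwards [this] with t ht
    simpa using ht
  have hdd' : deriv (deriv fun t : ℝ => w (x + t • h)) 0 = inner ℝ (H h) h :=
    hd'.deriv_eq.trans hdd.deriv
  have hmin := isLocalMin_of_deriv_deriv_pos (hdd' ▸ hpos) hmax'.deriv_eq_zero
    hd.self_of_nhds.continuousAt
  have hconst : (fun t : ℝ => w (x + t • h)) =ᶠ[𝓝 0] fun _ => w (x + (0 : ℝ) • h) := by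
    filter_upwards [hmax', hmin] with t h1 h2
    exact le_antisymm h1 h2
  have := hconst.deriv.deriv_eq
  simp only [deriv_const'] at this
  linarith [hdd', this]

/-- The trace of a negative semidefinite operator against the positive semidefinite operator
`1 - c p ⊗ p` is nonpositive. -/
theorem LinearMap.trace_sub_inner_nonpos {E : Type*} [NormedAddCommGroup E]
    [InnerProductSpace ℝ E] [FiniteDimensional ℝ E] (L : E →ₗ[ℝ] E)
    (hL : ∀ h, inner ℝ (L h) h ≤ 0) (p : E) {c : ℝ} (hc : c * ‖p‖ ^ 2 ≤ 1) :
    LinearMap.trace ℝ E L - c * inner ℝ (L p) p ≤ 0 := by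
  classical
  by_cases hp : p = 0
  · subst hp
    rw [LinearMap.trace_eq_sum_inner L (stdOrthonormalBasis ℝ E)]
    simp only [map_zero, inner_zero_left, mul_zero, sub_zero]
    exact Finset.sum_nonpos fun i _ => by rw [real_inner_comm]; exact hL _
  · have hp' : 0 < ‖p‖ := norm_pos_iff.mpr hp
    set e : E := ‖p‖⁻¹ • p with he
    have hen : ‖e‖ = 1 := by rw [he, norm_smul]; field_simp; simp [hp'.ne']
    have hpe : p = ‖p‖ • e := by rw [he, smul_smul, mul_inv_cancel₀ hp'.ne', one_smul]
    obtain ⟨u, b, hu, hb⟩ := Orthonormal.exists_orthonormalBasis_extension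
      (𝕜 := ℝ) (v := ({e} : Set E)) (by
        constructor
        · rintro ⟨y, rfl⟩; exact hen
        · intro i j hij; exact absurd (Subsingleton.elim i j) hij)
    rw [LinearMap.trace_eq_sum_inner L b]
    have hle : ∑ i, inner ℝ (b i) (L (b i)) ≤ inner ℝ (L e) e := by
      have hmem : e ∈ u := by exact_mod_cast hu rfl
      rw [← Finset.add_sum_erase _ _ (Finset.mem_univ (⟨e, hmem⟩ : u))]
      have h1 : b ⟨e, hmem⟩ = e := by rw [hb]
      rw [h1, real_inner_comm]
      have : ∑ i ∈ Finset.univ.erase (⟨e, hmem⟩ : u), inner ℝ (b i) (L (b i)) ≤ 0 :=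
        Finset.sum_nonpos fun i _ => by rw [real_inner_comm]; exact hL _
      linarith
    have h2 : inner ℝ (L p) p = ‖p‖ ^ 2 * inner ℝ (L e) e := by
      conv_lhs => rw [hpe]
      rw [map_smul, inner_smul_left, inner_smul_right]
      simp; ring
    rw [h2]
    nlinarith [hL e]

/-- Derivative of the normalised field `G / √(s + |G|²)`. -/
theorem HasFDerivAt.inv_sqrt_add_norm_sq_smul {E : Type*} [NormedAddCommGroup E]
    [InnerProductSpace ℝ E] {G : E → E} {H : E →L[ℝ] E} {x : E} {s : ℝ}
    (hG : HasFDerivAt G H x) (hpos : 0 < s + ‖G x‖ ^ 2) :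
    HasFDerivAt (fun y => (Real.sqrt (s + ‖G y‖ ^ 2))⁻¹ • G y)
      ((Real.sqrt (s + ‖G x‖ ^ 2))⁻¹ • H -
        (Real.sqrt (s + ‖G x‖ ^ 2) ^ 3)⁻¹ • ((innerSL ℝ (G x)).comp H).smulRight (G x)) x := by
  have hW : 0 < Real.sqrt (s + ‖G x‖ ^ 2) := Real.sqrt_pos.mpr hpos
  have hinv := (hasDerivAt_inv hW.ne').comp_hasFDerivAt x
    ((hG.norm_sq.const_add s).sqrt hpos.ne')
  refine (hinv.smul hG).congr_fderiv ?_
  ext1 h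
  simp only [Function.comp_apply, add_apply, smul_apply, ContinuousLinearMap.smulRight_apply,
    ContinuousLinearMap.comp_apply, innerSL_apply_apply, smul_smul, smul_eq_mul, sub_eq_add_neg,
    ← neg_smul, nsmul_eq_mul]
  congr 2
  field_simp
  norm_num

/-- Divergence of the normalised field `G / √(ε² + |G|²)`. -/
theorem vdiv_normalized {n : ℕ}
    {G : EuclideanSpace ℝ (Fin (n + 1)) → EuclideanSpace ℝ (Fin (n + 1))}
    {H : EuclideanSpace ℝ (Fin (n + 1)) →L[ℝ] EuclideanSpace ℝ (Fin (n + 1))}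
    {x : EuclideanSpace ℝ (Fin (n + 1))} {ε : ℝ} (hε : 0 < ε) (hG : HasFDerivAt G H x) :
    vdiv (fun y => (Real.sqrt (ε ^ 2 + ‖G y‖ ^ 2))⁻¹ • G y) x =
      (Real.sqrt (ε ^ 2 + ‖G x‖ ^ 2))⁻¹ *
        (LinearMap.trace ℝ _ H.toLinearMap
          - (ε ^ 2 + ‖G x‖ ^ 2)⁻¹ * inner ℝ (H (G x)) (G x)) := by
  have hpos : 0 < ε ^ 2 + ‖G x‖ ^ 2 := by positivity
  have hW : 0 < Real.sqrt (ε ^ 2 + ‖G x‖ ^ 2) := Real.sqrt_pos.mpr hpos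
  have hsq := Real.sq_sqrt hpos.le
  rw [vdiv, (hG.inv_sqrt_add_norm_sq_smul hpos).fderiv]
  have htr : LinearMap.trace ℝ (EuclideanSpace ℝ (Fin (n + 1)))
      (((innerSL ℝ (G x)).comp H).smulRight (G x)).toLinearMap = inner ℝ (H (G x)) (G x) := by
    rw [real_inner_comm]
    exact LinearMap.trace_smulRight ((innerSL ℝ (G x)).comp H).toLinearMap (G x)
  rw [ContinuousLinearMap.toLinearMap_sub, ContinuousLinearMap.toLinearMap_smul,
    ContinuousLinearMap.toLinearMap_smul, map_sub, map_smul, map_smul, htr]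
  set W := Real.sqrt (ε ^ 2 + ‖G x‖ ^ 2)
  rw [← hsq, smul_eq_mul, smul_eq_mul]
  field_simp

theorem hasFDerivAt_norm_sub {E : Type*} [NormedAddCommGroup E]
    [InnerProductSpace ℝ E] (c x : E) (hx : x ≠ c) :
    HasFDerivAt (fun y : E => ‖y - c‖) (innerSL ℝ (‖x - c‖⁻¹ • (x - c))) x := by
  have hr : 0 < ‖x - c‖ := norm_pos_iff.mpr (sub_ne_zero.mpr hx)
  have h := ((hasFDerivAt_id x).sub_const c).norm_sq.sqrt (by simpa using hr.ne')
  simp only [id, Real.sqrt_sq (norm_nonneg _)] at h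
  refine h.congr_fderiv ?_
  ext1 h
  simp
  field_simp

theorem hasFDerivAt_inv_norm_smul_sub {E : Type*} [NormedAddCommGroup E]
    [InnerProductSpace ℝ E] (c x : E) (hx : x ≠ c) :
    HasFDerivAt (fun y : E => ‖y - c‖⁻¹ • (y - c))
      (‖x - c‖⁻¹ • ContinuousLinearMap.id ℝ E
        - (‖x - c‖ ^ 3)⁻¹ • (innerSL ℝ (x - c)).smulRight (x - c)) x := by
  have hr : 0 < ‖x - c‖ := norm_pos_iff.mpr (sub_ne_zero.mpr hx)
  have h := ((hasFDerivAt_id x).sub_const c).inv_sqrt_add_norm_sq_smul (s := 0)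
    (by simpa using pow_pos hr 2)
  simpa [Real.sqrt_sq (norm_nonneg _)] using h

/-- Comparison of divergences at a local maximum of `u - v`, where `G` and `K` are the gradients
of `u` and `v`. -/
theorem vdiv_normalized_le_of_isLocalMax {n : ℕ}
    {w : EuclideanSpace ℝ (Fin (n + 1)) → ℝ}
    {G K : EuclideanSpace ℝ (Fin (n + 1)) → EuclideanSpace ℝ (Fin (n + 1))}
    {H L : EuclideanSpace ℝ (Fin (n + 1)) →L[ℝ] EuclideanSpace ℝ (Fin (n + 1))}
    {x : EuclideanSpace ℝ (Fin (n + 1))} {ε : ℝ} (hε : 0 < ε)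
    (hw : ∀ᶠ y in nhds x, HasFDerivAt w (innerSL ℝ (G y - K y)) y)
    (hG : HasFDerivAt G H x) (hK : HasFDerivAt K L x) (hmax : IsLocalMax w x) :
    G x = K x ∧ vdiv (fun y => (Real.sqrt (ε ^ 2 + ‖G y‖ ^ 2))⁻¹ • G y) x ≤
      vdiv (fun y => (Real.sqrt (ε ^ 2 + ‖K y‖ ^ 2))⁻¹ • K y) x := by
  have hGK : G x = K x := by
    have h0 := hmax.hasFDerivAt_eq_zero hw.self_of_nhds
    have h1 := DFunLike.congr_fun h0 (G x - K x)
    rw [innerSL_apply_apply, zero_apply, inner_self_eq_zero] at h1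
    exact sub_eq_zero.mp h1
  refine ⟨hGK, ?_⟩
  rw [vdiv_normalized hε hG, vdiv_normalized hε hK, hGK]
  refine mul_le_mul_of_nonneg_left ?_ (by positivity)
  have hneg := hmax.inner_hasFDerivAt_gradient_nonpos hw (hG.sub hK)
  have htr := LinearMap.trace_sub_inner_nonpos (H - L).toLinearMap hneg (K x)
    (c := (ε ^ 2 + ‖K x‖ ^ 2)⁻¹) (by
      rw [inv_mul_le_one₀ (by positivity)]
      nlinarith [sq_nonneg ε])
  rw [ContinuousLinearMap.toLinearMap_sub, map_sub] at htr
  simp only [LinearMap.sub_apply, ContinuousLinearMap.coe_coe, inner_sub_left] at htr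
  linarith

/-- Divergence of the normalised gradient of the cone `y ↦ -A |y - c|`. -/
theorem vdiv_normalized_cone {n : ℕ} {A ε : ℝ} (hε : 0 < ε)
    (c x : EuclideanSpace ℝ (Fin (n + 1))) (hx : x ≠ c) :
    vdiv (fun y => (Real.sqrt (ε ^ 2 + ‖(-A) • ‖y - c‖⁻¹ • (y - c)‖ ^ 2))⁻¹ •
        ((-A) • ‖y - c‖⁻¹ • (y - c))) x =
      -((Real.sqrt (ε ^ 2 + A ^ 2))⁻¹ * (A * (n / ‖x - c‖))) := by
  have hr : 0 < ‖x - c‖ := norm_pos_iff.mpr (sub_ne_zero.mpr hx)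
  have hder : HasFDerivAt (fun y => (-A) • ‖y - c‖⁻¹ • (y - c)) _ x :=
    (hasFDerivAt_inv_norm_smul_sub c x hx).const_smul (-A)
  have hnorm : ‖(-A) • ‖x - c‖⁻¹ • (x - c)‖ ^ 2 = A ^ 2 := by
    rw [norm_smul, norm_smul, norm_inv, norm_norm, inv_mul_cancel₀ hr.ne']
    simp
  have htr : LinearMap.trace ℝ (EuclideanSpace ℝ (Fin (n + 1)))
      ((innerSL ℝ (x - c)).smulRight (x - c)).toLinearMap = ‖x - c‖ ^ 2 := by
    rw [← real_inner_self_eq_norm_sq]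
    exact LinearMap.trace_smulRight (innerSL ℝ (x - c)).toLinearMap (x - c)
  have hid : LinearMap.trace ℝ (EuclideanSpace ℝ (Fin (n + 1)))
      (ContinuousLinearMap.id ℝ (EuclideanSpace ℝ (Fin (n + 1)))).toLinearMap = n + 1 := by
    refine (LinearMap.trace_id ℝ _).trans ?_
    simp
  have hzero : (‖x - c‖⁻¹ • ContinuousLinearMap.id ℝ (EuclideanSpace ℝ (Fin (n + 1)))
        - (‖x - c‖ ^ 3)⁻¹ • (innerSL ℝ (x - c)).smulRight (x - c)) (x - c) = 0 := by
    simp only [sub_apply, smul_apply,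
      ContinuousLinearMap.smulRight_apply, innerSL_apply_apply, real_inner_self_eq_norm_sq,
      smul_smul, ContinuousLinearMap.id_apply, ← sub_smul]
    convert zero_smul ℝ (x - c)
    field_simp
    ring
  rw [vdiv_normalized hε hder, hnorm, smul_apply, map_smul, map_smul, hzero,
    ContinuousLinearMap.toLinearMap_smul, ContinuousLinearMap.toLinearMap_sub,
    ContinuousLinearMap.toLinearMap_smul, ContinuousLinearMap.toLinearMap_smul,
    map_smul, map_sub, map_smul, map_smul, htr, hid]
  simp only [smul_zero, inner_zero_left, mul_zero, sub_zero, smul_eq_mul]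
  field_simp
  ring

/-- In the open set `Ω`, `gradC Ω u` is the gradient of `u`. -/
theorem hasFDerivAt_gradC {n : ℕ} {Ω : Set (EuclideanSpace ℝ (Fin (n + 1)))}
    {u : EuclideanSpace ℝ (Fin (n + 1)) → ℝ} (hΩ : IsOpen Ω)
    (hu : ContDiffOn ℝ (⊤ : ℕ∞) u (closure Ω)) {x : EuclideanSpace ℝ (Fin (n + 1))}
    (hx : x ∈ Ω) : HasFDerivAt u (innerSL ℝ (gradC Ω u x)) x := by
  have hmem : closure Ω ∈ nhds x := Filter.mem_of_superset (hΩ.mem_nhds hx) subset_closure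
  have hd : DifferentiableAt ℝ u x := (hu.contDiffAt hmem).differentiableAt (by simp)
  have heq : innerSL ℝ (gradC Ω u x) = fderiv ℝ u x := by
    rw [gradC, fderivWithin_of_mem_nhds hmem]
    ext h
    simp
  rw [heq]
  exact hd.hasFDerivAt

theorem differentiableAt_gradC {n : ℕ} {Ω : Set (EuclideanSpace ℝ (Fin (n + 1)))}
    {u : EuclideanSpace ℝ (Fin (n + 1)) → ℝ} (hΩ : IsOpen Ω)
    (hu : ContDiffOn ℝ (⊤ : ℕ∞) u (closure Ω)) {x : EuclideanSpace ℝ (Fin (n + 1))}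
    (hx : x ∈ Ω) : DifferentiableAt ℝ (gradC Ω u) x := by
  have hmem : closure Ω ∈ nhds x := Filter.mem_of_superset (hΩ.mem_nhds hx) subset_closure
  have hd : DifferentiableAt ℝ (fderiv ℝ u) x :=
    ((hu.contDiffAt hmem).fderiv_right (m := 1)
      (WithTop.coe_le_coe.mpr (le_top : (1 + 1 : ℕ∞) ≤ ⊤))).differentiableAt
      (by simp)
  have heq : fderivWithin ℝ u (closure Ω) =ᶠ[nhds x] fderiv ℝ u := by
    filter_upwards [hΩ.mem_nhds hx] with y hy
    exact fderivWithin_of_mem_nhds (Filter.mem_of_superset (hΩ.mem_nhds hy) subset_closure)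
  exact (InnerProductSpace.toDual ℝ
    (EuclideanSpace ℝ (Fin (n + 1)))).symm.toContinuousLinearEquiv.differentiableAt.comp x
      (hd.congr_of_eventuallyEq heq)

/-- Weak maximum principle: a continuous function on a compact closure without interior local
maximum is bounded by its boundary bound. -/
theorem le_of_no_isLocalMax {E : Type*} [TopologicalSpace E] {Ω : Set E} (hΩ : IsOpen Ω)
    (hc : IsCompact (closure Ω)) {w : E → ℝ} (hw : ContinuousOn w (closure Ω)) {M : ℝ}
    (hM : ∀ y ∈ frontier Ω, w y ≤ M) (hno : ∀ y ∈ Ω, ¬ IsLocalMax w y) :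
    ∀ x ∈ Ω, w x ≤ M := by
  intro x hx
  obtain ⟨y, hy, hmax⟩ := hc.exists_isMaxOn ⟨x, subset_closure hx⟩ hw
  by_cases hyΩ : y ∈ Ω
  · exact absurd (hmax.isLocalMax (Filter.mem_of_superset (hΩ.mem_nhds hyΩ) subset_closure))
      (hno y hyΩ)
  · exact (hmax (subset_closure hx)).trans (hM y (by rw [hΩ.frontier_eq]; exact ⟨hy, hyΩ⟩))

/-- Solutions are nonnegative. -/
theorem IsRegularizedSolution.nonneg {n : ℕ} {k ε : ℝ} (hε : 0 < ε)
    {Ω : Set (EuclideanSpace ℝ (Fin (n + 1)))} (hΩ : IsOpen Ω) (hb : Bornology.IsBounded Ω)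
    {u : EuclideanSpace ℝ (Fin (n + 1)) → ℝ} (hu : IsRegularizedSolution n k ε Ω u) :
    ∀ x ∈ Ω, 0 ≤ u x := by
  obtain ⟨hsm, heq, hbd⟩ := hu
  suffices h : ∀ x ∈ Ω, (fun y => -u y) x ≤ 0 from fun x hx => by simpa using h x hx
  refine le_of_no_isLocalMax hΩ hb.isCompact_closure hsm.continuousOn.neg
    (fun y hy => by simp [hbd y hy]) fun x hx hmax => ?_
  obtain ⟨h0, hle⟩ := vdiv_normalized_le_of_isLocalMax (G := fun _ => 0) (K := gradC Ω u) hε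
    (by filter_upwards [hΩ.mem_nhds hx] with y hy
        simpa using (hasFDerivAt_gradC hΩ hsm hy).neg)
    (hasFDerivAt_const 0 x) (differentiableAt_gradC hΩ hsm hx).hasFDerivAt hmax
  rw [heq x hx, vdiv_normalized hε (hasFDerivAt_const 0 x)] at hle
  have : 0 < (ε ^ 2 + ‖gradC Ω u x‖ ^ 2) ^ (-(1 : ℝ) / (2 * k)) := by positivity
  simp at hle
  linarith

/-- The cone of slope `(4 D + 4) ^ k` is a strict supersolution at distance at most `2 D + 1`
from its vertex. -/
theorem rpow_lt_cone_curvature {n : ℕ} (hn : 1 ≤ n) {k ε D r : ℝ} (hk : 1 ≤ k) (hε : 0 < ε)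
    (hε1 : ε ≤ 1) (hD : 0 ≤ D) (hr : 0 < r) (hrD : r ≤ 2 * D + 1) :
    (ε ^ 2 + ((4 * D + 4) ^ k) ^ 2) ^ (-(1 : ℝ) / (2 * k)) <
      (Real.sqrt (ε ^ 2 + ((4 * D + 4) ^ k) ^ 2))⁻¹ * ((4 * D + 4) ^ k * (n / r)) := by
  have hB : (0 : ℝ) < 4 * D + 4 := by linarith
  set A : ℝ := (4 * D + 4) ^ k with hA
  have hA1 : 1 ≤ A := Real.one_le_rpow (by linarith) (by linarith)
  have hW : Real.sqrt (ε ^ 2 + A ^ 2) ≤ 2 * A := by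
    rw [Real.sqrt_le_left (by linarith)]
    nlinarith
  have hW0 : 0 < Real.sqrt (ε ^ 2 + A ^ 2) := Real.sqrt_pos.mpr (by positivity)
  have hn' : (1 : ℝ) ≤ n := by exact_mod_cast hn
  have hleft : (ε ^ 2 + A ^ 2) ^ (-(1 : ℝ) / (2 * k)) ≤ (4 * D + 4)⁻¹ := by
    calc (ε ^ 2 + A ^ 2) ^ (-(1 : ℝ) / (2 * k)) ≤ (A ^ 2) ^ (-(1 : ℝ) / (2 * k)) :=
          Real.rpow_le_rpow_of_nonpos (by positivity) (by nlinarith)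
            (div_nonpos_of_nonpos_of_nonneg (by norm_num) (by linarith))
      _ = (4 * D + 4)⁻¹ := by
          rw [hA, ← Real.rpow_natCast, ← Real.rpow_mul hB.le, ← Real.rpow_mul hB.le,
            ← Real.rpow_neg_one]
          congr 1
          push_cast
          field_simp
  refine hleft.trans_lt ?_
  rw [← mul_assoc, inv_mul_eq_div, div_mul_div_comm, inv_eq_one_div,
    div_lt_div_iff₀ hB (by positivity)]
  have h1 : Real.sqrt (ε ^ 2 + A ^ 2) * r ≤ 2 * A * (2 * D + 1) := by gcongr
  have h2 : A ≤ A * n := by nlinarith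
  nlinarith

/-- **Uniform sup bound** (Lemma 3.1, Euclidean case): there is a constant `C`, depending
only on `n`, `k` and the diameter of `Ω`, bounding `sup_Ω |u|` for every solution `u` of
`(★★)_ε` with `ε ∈ (0,1]`. -/
theorem sup_bound (n : ℕ) (hn : 1 ≤ n) (k : ℝ) (hk : 1 ≤ k) :
    ∃ C : ℝ → ℝ, ∀ Ω : Set (EuclideanSpace ℝ (Fin (n + 1))),
      IsOpen Ω → Bornology.IsBounded Ω →
      ∀ ε : ℝ, ε ∈ Ioc (0 : ℝ) 1 →
      ∀ u : EuclideanSpace ℝ (Fin (n + 1)) → ℝ,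
        IsRegularizedSolution n k ε Ω u →
        ∀ x ∈ Ω, |u x| ≤ C (Metric.diam Ω) := by
  refine ⟨fun D => (4 * D + 4) ^ k * (2 * D + 1), fun Ω hΩ hb ε hε u hu x hx => ?_⟩
  rw [abs_of_nonneg (hu.nonneg hε.1 hΩ hb x hx)]
  obtain ⟨hsm, heq, hbd⟩ := hu
  set D := Metric.diam Ω with hDdef
  have hD : 0 ≤ D := Metric.diam_nonneg
  set A : ℝ := (4 * D + 4) ^ k with hA
  have hA0 : 0 < A := Real.rpow_pos_of_pos (by linarith) _
  set c : EuclideanSpace ℝ (Fin (n + 1)) := x + EuclideanSpace.single 0 (D + 1) with hc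
  have hxc : ‖x - c‖ = D + 1 := by
    rw [hc, sub_add_cancel_left, norm_neg, PiLp.norm_single, Real.norm_eq_abs,
      abs_of_nonneg (by linarith)]
  have hdist : ∀ y ∈ closure Ω, ‖y - x‖ ≤ D := fun y hy => by
    rw [← dist_eq_norm, hDdef, ← Metric.diam_closure]
    exact Metric.dist_le_diam_of_mem hb.closure hy (subset_closure hx)
  have hupper : ∀ y ∈ closure Ω, ‖y - c‖ ≤ 2 * D + 1 := fun y hy => by
    have := norm_sub_le_norm_sub_add_norm_sub y x c
    linarith [hdist y hy]
  have hlower : ∀ y ∈ closure Ω, 1 ≤ ‖y - c‖ := fun y hy => by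
    have := norm_sub_le_norm_sub_add_norm_sub x y c
    rw [norm_sub_rev x y] at this
    linarith [hdist y hy]
  have hne : ∀ y ∈ closure Ω, y ≠ c := fun y hy h => by
    have := hlower y hy
    norm_num [h] at this
  have hmain : ∀ z ∈ Ω, (fun y => u y + A * ‖y - c‖) z ≤ A * (2 * D + 1) := by
    refine le_of_no_isLocalMax hΩ hb.isCompact_closure
      (hsm.continuousOn.add (by fun_prop)) (fun y hy => ?_) fun y hy hmax => ?_
    · change u y + A * ‖y - c‖ ≤ _
      rw [hbd y hy, zero_add]
      exact mul_le_mul_of_nonneg_left (hupper y (frontier_subset_closure hy)) hA0.le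
    · have hyc := subset_closure hy
      have hgrad := (hasFDerivAt_inv_norm_smul_sub c y (hne y hyc)).const_smul (-A)
      obtain ⟨hG, hle⟩ := vdiv_normalized_le_of_isLocalMax (G := gradC Ω u)
        (K := fun y => (-A) • ‖y - c‖⁻¹ • (y - c)) hε.1
        (by filter_upwards [hΩ.mem_nhds hy] with z hz
            refine ((hasFDerivAt_gradC hΩ hsm hz).add
              ((hasFDerivAt_norm_sub c z (hne z (subset_closure hz))).const_mul A)).congr_fderiv ?_
            simp)
        (differentiableAt_gradC hΩ hsm hy).hasFDerivAt hgrad hmax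
      have hr : 0 < ‖y - c‖ := by linarith [hlower y hyc]
      have hnorm : ‖gradC Ω u y‖ ^ 2 = A ^ 2 := by
        rw [hG, norm_smul, norm_smul, norm_inv, norm_norm, inv_mul_cancel₀ hr.ne']
        simp
      rw [heq y hy, vdiv_normalized_cone hε.1 c y (hne y hyc), hnorm] at hle
      have := rpow_lt_cone_curvature hn hk hε.1 hε.2 hD hr (hupper y hyc)
      linarith
  have hx_le : u x + A * ‖x - c‖ ≤ A * (2 * D + 1) := hmain x hx
  have : 0 ≤ A * ‖x - c‖ := by positivity
  linarith
end

section
/- Let n ≥ 1, k ≥ 1, ε ∈ (0,1], let Ω ⊂ ℝ^{n+1} be a bounded open set, and let u be a solution of the regularised level-set equation (★★)_ε on Ω. Then sup_Ω |∇u| ≤ sup_{∂Ω} (1 + √(ε² + |∇u|²)), where on the right-hand side ∇u denotes the (continuous extension of the) gradient of u on ∂Ω. -/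
open MeasureTheory Metric Set

open Filter Topology

section BoundaryGradient

variable {E : Type*} [NormedAddCommGroup E] [NormedSpace ℝ E]

/-- A function vanishing on the frontier has a critical point along every chord that leaves the
closure at both ends. -/
lemma exists_isLocalExtr_of_chord {Ω : Set E} (hΩ : IsOpen Ω) {u : E → ℝ}
    (hu : ContinuousOn u (closure Ω)) (hu0 : ∀ x ∈ frontier Ω, u x = 0) {y w : E} (hy : y ∈ Ω)
    {t : ℝ} (ht : 0 < t) (h₁ : y + t • w ∉ closure Ω) (h₂ : y + (-t) • w ∉ closure Ω) :
    ∃ s ∈ Icc (-t) t, y + s • w ∈ Ω ∧ IsLocalExtr (fun r : ℝ => u (y + r • w)) s := by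
  set L : ℝ → E := fun r => y + r • w with hL
  have hLc : Continuous L := by fun_prop
  set K : Set ℝ := Icc (-t) t ∩ L ⁻¹' closure Ω with hK
  have hKc : IsCompact K := isCompact_Icc.inter_right (isClosed_closure.preimage hLc)
  have h0 : (0 : ℝ) ∈ K := ⟨⟨by linarith, by linarith⟩, by
    simpa [hL] using subset_closure hy⟩
  have huK : ContinuousOn (fun r => u (L r)) K :=
    hu.comp hLc.continuousOn fun r hr => hr.2
  have hnhds : ∀ s ∈ K, L s ∈ Ω → K ∈ 𝓝 s := by
    intro s hs hsΩ
    refine inter_mem (Icc_mem_nhds (lt_of_le_of_ne hs.1.1 ?_) (lt_of_le_of_ne hs.1.2 ?_)) ?_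
    · rintro rfl
      exact h₂ hs.2
    · rintro rfl
      exact h₁ hs.2
    · filter_upwards [(hΩ.preimage hLc).mem_nhds hsΩ] with r hr using subset_closure hr
  have hfr : ∀ s ∈ K, L s ∉ Ω → u (L s) = 0 := fun s hs hsΩ =>
    hu0 _ ⟨hs.2, by rwa [hΩ.interior_eq]⟩
  obtain ⟨a, haK, ha⟩ := hKc.exists_isMaxOn ⟨0, h0⟩ huK
  obtain ⟨b, hbK, hb⟩ := hKc.exists_isMinOn ⟨0, h0⟩ huK
  by_cases haΩ : L a ∈ Ω
  · exact ⟨a, haK.1, haΩ, Or.inr (ha.isLocalMax (hnhds a haK haΩ))⟩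
  by_cases hbΩ : L b ∈ Ω
  · exact ⟨b, hbK.1, hbΩ, Or.inl (hb.isLocalMin (hnhds b hbK hbΩ))⟩
  have h0Ω : L 0 ∈ Ω := by simpa [hL] using hy
  refine ⟨0, h0.1, h0Ω, Or.inr ?_⟩
  filter_upwards [hnhds 0 h0 h0Ω] with r hr
  have h3 : u (L r) ≤ u (L a) := ha hr
  have h4 : u (L b) ≤ u (L 0) := hb h0
  rw [hfr a haK haΩ] at h3
  rw [hfr b hbK hbΩ] at h4
  exact h3.trans h4

/-- At a frontier point where derivatives within the closure are not unique, the continuous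
extension of the derivative of a function vanishing on the frontier is zero. -/
lemma eq_zero_of_continuousWithinAt_of_not_unique {Ω : Set E} (hΩ : IsOpen Ω) {u : E → ℝ}
    (hu : ContinuousOn u (closure Ω)) (hu0 : ∀ x ∈ frontier Ω, u x = 0) {x : E}
    (hx : x ∈ closure Ω) {p : E → E →L[ℝ] ℝ} (hpc : ContinuousWithinAt p (closure Ω) x)
    (hp : ∀ᶠ y in 𝓝[closure Ω] x, HasFDerivWithinAt u (p y) (closure Ω) y)
    {l : E →L[ℝ] ℝ} (hl0 : l ≠ 0)
    (hl : HasFDerivWithinAt (fun _ => (0 : ℝ)) l (closure Ω) x) : p x = 0 := by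
  have hxΩ : x ∉ Ω := by
    intro hxΩ
    apply hl0
    have hz := hl.hasFDerivAt (mem_of_superset (hΩ.mem_nhds hxΩ) subset_closure)
    exact hz.unique (hasFDerivAt_const _ _)
  have key : ∀ w, l w ≠ 0 → p x w = 0 := by
    intro w hw
    by_contra hne
    have hpw : ContinuousWithinAt (fun y => p y w) (closure Ω) x :=
      hpc.clm_apply continuousWithinAt_const
    have hev : ∀ᶠ y in 𝓝[closure Ω] x, p y w ≠ 0 := hpw.eventually_ne hne
    set c : ℝ := |l w| / (2 * (2 + ‖w‖)) with hc
    have hlw : 0 < |l w| := abs_pos.mpr hw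
    have hcpos : 0 < c := by positivity
    have hsmall : ∀ᶠ y in 𝓝[closure Ω] x, |l (y - x)| ≤ c * ‖y - x‖ := by
      simpa [abs_sub_comm (l x)] using hl.isLittleO.def hcpos
    obtain ⟨r, hr, hball⟩ := Metric.mem_nhdsWithin_iff.1 ((hev.and hp).and hsmall)
    set ρ : ℝ := r / (1 + ‖w‖) with hρ
    have hρpos : 0 < ρ := by positivity
    obtain ⟨y, hyΩ, hyx⟩ := Metric.mem_closure_iff.1 hx ρ hρpos
    rw [dist_comm, dist_eq_norm] at hyx
    set t := ‖y - x‖ with ht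
    have htpos : 0 < t := norm_pos_iff.2 (sub_ne_zero.2 fun h => hxΩ (h ▸ hyΩ))
    have hdist : ∀ s ∈ Icc (-t) t, ‖y + s • w - x‖ ≤ t * (1 + ‖w‖) := by
      intro s hs
      have h1 : ‖y + s • w - x‖ ≤ ‖y - x‖ + ‖s • w‖ := by
        rw [add_sub_right_comm]; exact norm_add_le _ _
      rw [norm_smul, Real.norm_eq_abs] at h1
      have h2 : |s| * ‖w‖ ≤ t * ‖w‖ :=
        mul_le_mul_of_nonneg_right (abs_le.2 hs) (norm_nonneg _)
      linarith
    have htr : t * (1 + ‖w‖) < r := by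
      rwa [hρ, lt_div_iff₀ (by positivity)] at hyx
    have hmem : ∀ s ∈ Icc (-t) t, y + s • w ∈ closure Ω → y + s • w ∈ ball x r ∩ closure Ω :=
      fun s hs h => ⟨by rw [mem_ball, dist_eq_norm]; exact (hdist s hs).trans_lt htr, h⟩
    have h0 : |l (y - x)| ≤ c * t := by
      have := (hball (hmem 0 ⟨by linarith, by linarith⟩ (by simpa using subset_closure hyΩ))).2
      simpa using this
    have hout : ∀ s ∈ Icc (-t) t, |s| = t → y + s • w ∉ closure Ω := by
      intro s hs hst hmem'
      have h1 := (hball (hmem s hs hmem')).2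
      have h2 := h1.trans (mul_le_mul_of_nonneg_left (hdist s hs) hcpos.le)
      have h3 : l (y + s • w - x) = l (y - x) + s * l w := by
        rw [add_sub_right_comm, map_add, map_smul, smul_eq_mul]
      rw [h3] at h2
      have h4 : |s * l w| ≤ |l (y - x) + s * l w| + |l (y - x)| := by
        have := abs_sub (l (y - x) + s * l w) (l (y - x))
        simpa using this
      rw [abs_mul, hst] at h4
      have h5 : c * (2 * (2 + ‖w‖)) = |l w| := by
        rw [hc]; field_simp
      have h6 : t * |l w| ≤ t * (c * (2 + ‖w‖)) := by linarith
      have h7 := le_of_mul_le_mul_left h6 htpos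
      linarith
    obtain ⟨s, hs, hsΩ, hext⟩ := exists_isLocalExtr_of_chord hΩ hu hu0 hyΩ htpos
      (hout t ⟨by linarith, le_rfl⟩ (abs_of_pos htpos))
      (hout (-t) ⟨le_rfl, by linarith⟩ (by rw [abs_neg, abs_of_pos htpos]))
    have h1 := (hball (hmem s hs (subset_closure hsΩ))).1
    refine h1.1 ?_
    have hd : HasFDerivAt u (p (y + s • w)) (y + s • w) :=
      h1.2.hasFDerivAt (mem_of_superset (hΩ.mem_nhds hsΩ) subset_closure)
    have hline : HasDerivAt (fun r : ℝ => y + r • w) w s := by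
      simpa using ((hasDerivAt_id s).smul_const w).const_add y
    exact hext.hasDerivAt_eq_zero (hd.comp_hasDerivAt s hline)
  obtain ⟨w, hw⟩ : ∃ w, l w ≠ 0 := by
    by_contra! h
    exact hl0 (ContinuousLinearMap.ext h)
  ext v
  by_cases hv : l v = 0
  · have h1 := key (v + w) (by rw [map_add, hv, zero_add]; exact hw)
    rw [map_add, key w hw, add_zero] at h1
    simpa using h1
  · simpa using key v hv

/-- The derivative within the closure of an open set is continuous for a `C¹` function vanishing
on the frontier, whatever the regularity of the frontier. -/
lemma continuousOn_fderivWithin_closure {Ω : Set E} (hΩ : IsOpen Ω) {u : E → ℝ}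
    (hu : ContDiffOn ℝ 1 u (closure Ω)) (hu0 : ∀ x ∈ frontier Ω, u x = 0) :
    ContinuousOn (fderivWithin ℝ u (closure Ω)) (closure Ω) := by
  intro x hx
  have h1 : ContDiffWithinAt ℝ (0 + 1) u (closure Ω) x := by simpa using hu x hx
  obtain ⟨v, hv, -, -, p, hp, hpc⟩ :=
    (contDiffWithinAt_succ_iff_hasFDerivWithinAt' (by simp)).1 h1
  rw [insert_eq_of_mem hx] at hv
  obtain ⟨v', hv', hpc⟩ := (contDiffWithinAt_zero hx).1 hpc
  have hev : ∀ᶠ y in 𝓝[closure Ω] x, HasFDerivWithinAt u (p y) (closure Ω) y :=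
    mem_of_superset hv hp
  have heq : ∀ᶠ y in 𝓝[closure Ω] x, fderivWithin ℝ u (closure Ω) y = p y := by
    filter_upwards [eventually_eventually_nhdsWithin.2 hev,
      eventually_eventually_nhdsWithin.2 hv', self_mem_nhdsWithin] with y hy hyv' hyc
    by_contra hne
    have hpy := hy.self_of_nhdsWithin hyc
    have hpcy : ContinuousWithinAt p (closure Ω) y :=
      (hpc y ⟨hyc, hyv'.self_of_nhdsWithin hyc⟩).mono_of_mem_nhdsWithin
        (inter_mem self_mem_nhdsWithin hyv')
    have hdiff := hpy.differentiableWithinAt.hasFDerivWithinAt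
    have h0 : p y = 0 := by
      refine eq_zero_of_continuousWithinAt_of_not_unique hΩ hu.continuousOn hu0 hyc hpcy hy
        (sub_ne_zero.2 hne) ?_
      simpa using hdiff.fun_sub hpy
    apply hne
    rw [h0] at hpy ⊢
    rw [fderivWithin, if_pos hpy]
  exact ((hpc x ⟨hx, mem_of_mem_nhdsWithin hx hv'⟩).mono_of_mem_nhdsWithin
    (inter_mem self_mem_nhdsWithin hv')).congr_of_eventuallyEq heq (heq.self_of_nhdsWithin hx)

end BoundaryGradient

/-- Necessary second-order condition at a local maximum on the line. -/
lemma IsLocalMax.deriv_deriv_nonpos {f : ℝ → ℝ} {a : ℝ} (h : IsLocalMax f a)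
    (hf : ContinuousAt f a) : deriv (deriv f) a ≤ 0 := by
  by_contra! hpos
  have hmin := isLocalMin_of_deriv_deriv_pos hpos h.deriv_eq_zero hf
  have hconst : f =ᶠ[𝓝 a] fun _ => f a := by
    filter_upwards [h, hmin] with x h1 h2 using le_antisymm h1 h2
  have h2 : deriv f =ᶠ[𝓝 a] fun _ => 0 := by
    filter_upwards [hconst.eventuallyEq_nhds] with x hx
    rw [hx.deriv_eq, deriv_const]
  rw [h2.deriv_eq, deriv_const] at hpos
  exact lt_irrefl _ hpos

section MaximumPrinciple

variable {E : Type*} [NormedAddCommGroup E] [InnerProductSpace ℝ E] [FiniteDimensional ℝ E]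

/-- The trace as a continuous linear functional on continuous endomorphisms. -/
noncomputable def traceCLM (E : Type*) [NormedAddCommGroup E] [InnerProductSpace ℝ E]
    [FiniteDimensional ℝ E] : (E →L[ℝ] E) →L[ℝ] ℝ :=
  LinearMap.toContinuousLinearMap
    (LinearMap.trace ℝ E ∘ₗ ContinuousLinearMap.coeLM (S := ℝ) (M := E) (N₃ := E) (R := ℝ))

lemma traceCLM_apply (T : E →L[ℝ] E) : traceCLM E T = LinearMap.trace ℝ E (T : E →ₗ[ℝ] E) := rfl

/-- If `A` is symmetric positive semidefinite and the quadratic form of `T` is bounded above by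
`-c ⟪a, ·⟫²`, then `tr (A T) ≤ -c ⟪A a, a⟫`. -/
lemma traceCLM_comp_le {A T : E →L[ℝ] E} (hA : (A : E →ₗ[ℝ] E).IsSymmetric)
    (hA0 : ∀ y, 0 ≤ inner ℝ (A y) y) {c : ℝ} {a : E}
    (hT : ∀ y, inner ℝ (T y) y ≤ -c * inner ℝ a y ^ 2) :
    traceCLM E (A ∘L T) ≤ -c * inner ℝ (A a) a := by
  set b := hA.eigenvectorBasis rfl with hb
  have hAb : ∀ i, A (b i) = hA.eigenvalues rfl i • b i := fun i =>
    hA.apply_eigenvectorBasis rfl i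
  have hnn : ∀ i, 0 ≤ hA.eigenvalues rfl i := fun i => by
    have := hA0 (b i)
    rw [hAb, inner_smul_left, real_inner_self_eq_norm_sq, b.norm_eq_one] at this
    simpa using this
  have hsum : inner ℝ (A a) a = ∑ i, hA.eigenvalues rfl i * inner ℝ a (b i) ^ 2 := by
    rw [← b.sum_inner_mul_inner (A a) a]
    refine Finset.sum_congr rfl fun i _ => ?_
    have : inner ℝ (A a) (b i) = inner ℝ a (A (b i)) := hA a (b i)
    rw [this, hAb, inner_smul_right, real_inner_comm a (b i)]
    ring
  rw [traceCLM_apply, LinearMap.trace_eq_sum_inner _ b, hsum, Finset.mul_sum]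
  refine Finset.sum_le_sum fun i _ => ?_
  have h1 : inner ℝ (b i) ((A ∘L T : E →L[ℝ] E) (b i))
      = hA.eigenvalues rfl i * inner ℝ (T (b i)) (b i) := by
    have : inner ℝ (A (b i)) (T (b i)) = inner ℝ (b i) (A (T (b i))) := hA (b i) (T (b i))
    rw [ContinuousLinearMap.comp_apply, ← this, hAb, real_inner_smul_left, real_inner_comm]
  calc _ = hA.eigenvalues rfl i * inner ℝ (T (b i)) (b i) := h1
    _ ≤ hA.eigenvalues rfl i * (-c * inner ℝ a (b i) ^ 2) :=
        mul_le_mul_of_nonneg_left (hT (b i)) (hnn i)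
    _ = _ := by ring

/-- Maximum principle for the components of a gradient field `G` solving the quasilinear elliptic
equation `tr (A(G) DG) = g(G)`. -/
lemma inner_le_of_forall_frontier_inner_le {Ω : Set E} (hΩ : IsOpen Ω)
    (hb : Bornology.IsBounded Ω) {G : E → E} (hGc : ContinuousOn G (closure Ω))
    (hG : ContDiffOn ℝ 2 G Ω) (hsymm : ∀ x ∈ Ω, (fderiv ℝ G x : E →ₗ[ℝ] E).IsSymmetric)
    {A : E → E →L[ℝ] E} (hA : ContDiff ℝ 1 A) (hAs : ∀ p, (A p : E →ₗ[ℝ] E).IsSymmetric)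
    (hApos : ∀ p y, y ≠ 0 → 0 < inner ℝ (A p y) y) {g : E → ℝ} (hg : ContDiff ℝ 1 g)
    (heq : ∀ x ∈ Ω, traceCLM E (A (G x) ∘L fderiv ℝ G x) = g (G x)) {e : E} (he : e ≠ 0) {m : ℝ}
    (hm : ∀ x ∈ frontier Ω, inner ℝ (G x) e ≤ m) {x₀ : E} (hx₀ : x₀ ∈ Ω) :
    inner ℝ (G x₀) e ≤ m := by
  by_contra! hlt
  set w : E → ℝ := fun x => inner ℝ (G x) e with hw
  have hcompact : IsCompact (closure Ω) := hb.isCompact_closure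
  have hwc : ContinuousOn w (closure Ω) := hGc.inner continuousOn_const
  set m' : ℝ := (m + w x₀) / 2 with hm'
  have hm₁ : m < m' := by rw [hm']; linarith
  have hm₂ : m' < w x₀ := by rw [hm']; linarith
  set S : Set E := closure Ω ∩ w ⁻¹' Ici m' with hS
  have hSc : IsCompact S :=
    hcompact.of_isClosed_subset (hwc.preimage_isClosed_of_isClosed isClosed_closure isClosed_Ici)
      inter_subset_left
  have hSΩ : S ⊆ Ω := by
    intro x hx
    by_contra hxΩ
    have h1 := hm x ⟨hx.1, by rwa [hΩ.interior_eq]⟩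
    have h2 : m' ≤ w x := hx.2
    exact absurd (h2.trans h1) (not_le.2 hm₁)
  -- derivatives of the coefficients
  have hHC : ContDiffOn ℝ 1 (fderiv ℝ G) Ω := hG.fderiv_of_isOpen hΩ (by norm_num)
  have hHd : ∀ x ∈ Ω, HasFDerivAt (fderiv ℝ G) (fderiv ℝ (fderiv ℝ G) x) x := fun x hx =>
    ((hHC.contDiffAt (hΩ.mem_nhds hx)).differentiableAt (by norm_num)).hasFDerivAt
  have hGd : ∀ x ∈ Ω, HasFDerivAt G (fderiv ℝ G x) x := fun x hx =>
    ((hG.contDiffAt (hΩ.mem_nhds hx)).differentiableAt (by norm_num)).hasFDerivAt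
  have hGΩ : ContinuousOn G Ω := hGc.mono subset_closure
  set B : E → ℝ := fun x => fderiv ℝ g (G x) e
    - traceCLM E ((fderiv ℝ A (G x) e) ∘L fderiv ℝ G x) with hB
  set Q : E → ℝ := fun x => inner ℝ (A (G x) e) e with hQ
  have hBc : ContinuousOn B Ω := by
    have h1 : ContinuousOn (fun x => fderiv ℝ g (G x)) Ω :=
      (hg.continuous_fderiv (by norm_num)).comp_continuousOn hGΩ
    have h2 : ContinuousOn (fun x => fderiv ℝ A (G x)) Ω :=
      (hA.continuous_fderiv (by norm_num)).comp_continuousOn hGΩ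
    exact (h1.clm_apply continuousOn_const).sub ((traceCLM E).continuous.comp_continuousOn
      ((h2.clm_apply continuousOn_const).clm_comp hHC.continuousOn))
  have hQc : ContinuousOn Q Ω :=
    ((hA.continuous.comp_continuousOn hGΩ).clm_apply continuousOn_const).inner continuousOn_const
  have hQpos : ∀ x, 0 < Q x := fun x => hApos _ _ he
  obtain ⟨C, hC⟩ := hSc.exists_bound_of_continuousOn
    ((hBc.div hQc fun x _ => (hQpos x).ne').mono hSΩ)
  set lam : ℝ := |C| + 1 with hlam
  have hlampos : 0 < lam := by positivity
  have hlamB : ∀ x ∈ S, B x < lam * Q x := by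
    intro x hx
    have h1 := (le_abs_self _).trans (hC x hx)
    rw [Pi.div_apply, div_le_iff₀ (hQpos x)] at h1
    have h2 : C * Q x < lam * Q x :=
      mul_lt_mul_of_pos_right ((le_abs_self C).trans_lt (lt_add_one _)) (hQpos x)
    exact h1.trans_lt h2
  -- the barrier
  set φ : E → ℝ := fun x => Real.exp (lam * inner ℝ e x) with hφ
  have hφc : Continuous φ := by fun_prop
  obtain ⟨D, hD⟩ := hcompact.exists_bound_of_continuousOn hφc.continuousOn
  have hφpos : ∀ x, 0 < φ x := fun x => Real.exp_pos _
  set η : ℝ := (w x₀ - m') / (|D| + 1) with hη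
  have hηpos : 0 < η := div_pos (by linarith) (by positivity)
  obtain ⟨x, hxc, hxmax⟩ := hcompact.exists_isMaxOn (f := fun x => w x + η * φ x)
    ⟨x₀, subset_closure hx₀⟩ (hwc.add (hφc.const_mul η).continuousOn)
  have hxS : x ∈ S := by
    refine ⟨hxc, ?_⟩
    have h1 : w x₀ + η * φ x₀ ≤ w x + η * φ x := hxmax (subset_closure hx₀)
    have h2 : φ x ≤ |D| + 1 := by
      have := (le_abs_self _).trans (hD x hxc)
      linarith [le_abs_self D]
    have h3 : η * φ x ≤ w x₀ - m' := by
      calc η * φ x ≤ η * (|D| + 1) := mul_le_mul_of_nonneg_left h2 hηpos.le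
        _ = w x₀ - m' := by rw [hη]; field_simp
    have h4 := mul_pos hηpos (hφpos x₀)
    change m' ≤ w x
    linarith
  have hxΩ := hSΩ hxS
  have hloc : IsLocalMax (fun x => w x + η * φ x) x :=
    hxmax.isLocalMax (mem_of_superset (hΩ.mem_nhds hxΩ) subset_closure)
  -- first and second derivatives along lines
  have hline : ∀ (y : E) (t : ℝ), HasDerivAt (fun t : ℝ => x + t • y) y t := fun y t => by
    simpa using ((hasDerivAt_id t).smul_const y).const_add x
  have hφline : ∀ (y : E) (t : ℝ), HasDerivAt (fun t : ℝ => φ (x + t • y))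
      (φ (x + t • y) * (lam * inner ℝ e y)) t := fun y t => by
    have h1 : HasDerivAt (fun t : ℝ => inner ℝ e (x + t • y)) (inner ℝ e y) t := by
      simpa using (hasDerivAt_const t e).inner ℝ (hline y t)
    exact (h1.const_mul lam).exp
  have hd₁ : ∀ (y : E) (t : ℝ), x + t • y ∈ Ω →
      HasDerivAt (fun t : ℝ => w (x + t • y) + η * φ (x + t • y))
        (inner ℝ (fderiv ℝ G (x + t • y) y) e + η * (φ (x + t • y) * (lam * inner ℝ e y))) t := by
    intro y t hyt
    have h1 : HasDerivAt (fun t : ℝ => G (x + t • y)) (fderiv ℝ G (x + t • y) y) t :=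
      (hGd _ hyt).comp_hasDerivAt t (hline y t)
    have h2 : HasDerivAt (fun t : ℝ => w (x + t • y)) (inner ℝ (fderiv ℝ G (x + t • y) y) e) t := by
      simpa using h1.inner ℝ (hasDerivAt_const t e)
    exact h2.add ((hφline y t).const_mul η)
  have hlocline : ∀ y : E,
      IsLocalMax (fun t : ℝ => w (x + t • y) + η * φ (x + t • y)) 0 := fun y => by
    have hc : ContinuousAt (fun t : ℝ => x + t • y) 0 := (hline y 0).continuousAt
    have h0 : x + (0 : ℝ) • y = x := by simp
    have := hc.tendsto.eventually (p := fun z => w z + η * φ z ≤ w x + η * φ x) (by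
      rw [h0]; exact hloc)
    simpa [IsLocalMax, IsMaxFilter, h0] using this
  have hfirst : fderiv ℝ G x e = -(η * φ x * lam) • e := by
    refine ext_inner_right ℝ fun y => ?_
    have h1 := (hlocline y).hasDerivAt_eq_zero (hd₁ y 0 (by simpa using hxΩ))
    have h2 : inner ℝ (fderiv ℝ G x y) e = inner ℝ y (fderiv ℝ G x e) := hsymm x hxΩ y e
    simp only [zero_smul, add_zero] at h1
    rw [h2, real_inner_comm] at h1
    rw [real_inner_smul_left]
    linarith
  have hsecond : ∀ y : E, inner ℝ (fderiv ℝ (fderiv ℝ G) x y y) e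
      ≤ -(η * φ x * lam ^ 2) * inner ℝ e y ^ 2 := by
    intro y
    have h1 := (hlocline y).deriv_deriv_nonpos (hd₁ y 0 (by simpa using hxΩ)).continuousAt
    have hev : ∀ᶠ t in 𝓝 (0 : ℝ), x + t • y ∈ Ω :=
      (hline y 0).continuousAt.preimage_mem_nhds (hΩ.mem_nhds (by simpa using hxΩ))
    have h2 : deriv (fun t : ℝ => w (x + t • y) + η * φ (x + t • y)) =ᶠ[𝓝 0] fun t =>
        inner ℝ (fderiv ℝ G (x + t • y) y) e + η * (φ (x + t • y) * (lam * inner ℝ e y)) := by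
      filter_upwards [hev] with t ht using (hd₁ y t ht).deriv
    have h3 : HasDerivAt (fun t : ℝ => fderiv ℝ G (x + t • y))
        (fderiv ℝ (fderiv ℝ G) x y) 0 := by
      have := (hHd (x + (0 : ℝ) • y) (by simpa using hxΩ)).comp_hasDerivAt 0 (hline y 0)
      rw [zero_smul, add_zero] at this
      exact this
    have h4 : HasDerivAt (fun t : ℝ => inner ℝ (fderiv ℝ G (x + t • y) y) e)
        (inner ℝ (fderiv ℝ (fderiv ℝ G) x y y) e) 0 := by
      simpa using (h3.clm_apply (hasDerivAt_const (0 : ℝ) y)).inner ℝ (hasDerivAt_const (0 : ℝ) e)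
    have h5 := h4.add (((hφline y 0).mul_const (lam * inner ℝ e y)).const_mul η)
    have h6 := h5.deriv
    rw [h2.deriv_eq] at h1
    simp only [zero_smul, add_zero] at h6
    have h7 := h6.symm.trans_le h1
    nlinarith
  -- symmetries of the third derivatives
  have hswap : ∀ y, inner ℝ (fderiv ℝ (fderiv ℝ G) x e y) y
      = inner ℝ (fderiv ℝ (fderiv ℝ G) x y y) e := by
    intro y
    have h1 : IsSymmSndFDerivAt ℝ G x :=
      (hG.contDiffAt (hΩ.mem_nhds hxΩ)).isSymmSndFDerivAt (by simp)
    rw [h1 e y]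
    have hder : ∀ a b : E, HasFDerivAt (fun z => inner ℝ (fderiv ℝ G z a) b)
        (innerSL ℝ b ∘L (ContinuousLinearMap.apply ℝ E a ∘L fderiv ℝ (fderiv ℝ G) x)) x := by
      intro a b
      have h2 := ((innerSL ℝ b).hasFDerivAt.comp x
        ((ContinuousLinearMap.apply ℝ E a).hasFDerivAt.comp x (hHd x hxΩ)))
      refine h2.congr_of_eventuallyEq (Eventually.of_forall fun z => ?_)
      simp [real_inner_comm]
    have h3 := (hder e y).congr_of_eventuallyEq (f₁ := fun z => inner ℝ (fderiv ℝ G z y) e) (by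
      filter_upwards [hΩ.mem_nhds hxΩ] with z hz
      have : inner ℝ (fderiv ℝ G z y) e = inner ℝ y (fderiv ℝ G z e) := hsymm z hz y e
      rw [this, real_inner_comm])
    have h4 := DFunLike.congr_fun (h3.unique (hder y e)) y
    simpa [real_inner_comm] using h4
  -- differentiating the equation in the direction `e`
  have hdiffeq : traceCLM E (A (G x) ∘L fderiv ℝ (fderiv ℝ G) x e)
      + traceCLM E (fderiv ℝ A (G x) (fderiv ℝ G x e) ∘L fderiv ℝ G x)
      = fderiv ℝ g (G x) (fderiv ℝ G x e) := by
    have hAd : HasFDerivAt (fun z => A (G z)) (fderiv ℝ A (G x) ∘L fderiv ℝ G x) x :=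
      ((hA.differentiable (by norm_num)) (G x)).hasFDerivAt.comp x (hGd x hxΩ)
    have hgd : HasFDerivAt (fun z => g (G z)) (fderiv ℝ g (G x) ∘L fderiv ℝ G x) x :=
      ((hg.differentiable (by norm_num)) (G x)).hasFDerivAt.comp x (hGd x hxΩ)
    have h1 := (traceCLM E).hasFDerivAt.comp x (hAd.clm_comp (hHd x hxΩ))
    have h2 := h1.congr_of_eventuallyEq (f₁ := fun z => g (G z)) (by
      filter_upwards [hΩ.mem_nhds hxΩ] with z hz using (heq z hz).symm)
    have h3 := DFunLike.congr_fun (h2.unique hgd) e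
    simpa using h3
  have htr := traceCLM_comp_le (T := fderiv ℝ (fderiv ℝ G) x e) (hAs (G x))
    (fun y => by
      rcases eq_or_ne y 0 with rfl | hy
      · simp
      · exact (hApos _ y hy).le)
    (fun y => (hswap y).trans_le (hsecond y))
  rw [hfirst] at hdiffeq
  simp only [map_smul, ContinuousLinearMap.smul_comp, smul_eq_mul] at hdiffeq
  have hBx := hlamB x hxS
  have hpos : 0 < η * φ x * lam := mul_pos (mul_pos hηpos (hφpos x)) hlampos
  have hlt' := mul_lt_mul_of_pos_left hBx hpos
  simp only [hB, hQ] at hlt'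
  nlinarith

end MaximumPrinciple

section Flux

variable {E : Type*} [NormedAddCommGroup E]

lemma sq_add_norm_sq_pos {ε : ℝ} (hε : 0 < ε) (p : E) : 0 < ε ^ 2 + ‖p‖ ^ 2 := by positivity

variable [InnerProductSpace ℝ E]

/-- The flux `p ↦ p / √(ε² + |p|²)`. -/
noncomputable def flux (ε : ℝ) (p : E) : E := (Real.sqrt (ε ^ 2 + ‖p‖ ^ 2))⁻¹ • p

variable {ε : ℝ}

lemma contDiff_flux (hε : 0 < ε) {n : WithTop ℕ∞} : ContDiff ℝ n (flux ε : E → E) := by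
  have h1 : ContDiff ℝ n fun p : E => ε ^ 2 + ‖p‖ ^ 2 := contDiff_const.add (contDiff_norm_sq ℝ)
  exact ((h1.sqrt fun p => (sq_add_norm_sq_pos hε p).ne').inv
    fun p => (Real.sqrt_pos.2 (sq_add_norm_sq_pos hε p)).ne').smul contDiff_id

lemma fderiv_flux_apply (hε : 0 < ε) (p y : E) :
    fderiv ℝ (flux ε) p y = (Real.sqrt (ε ^ 2 + ‖p‖ ^ 2))⁻¹ • y
      - (((Real.sqrt (ε ^ 2 + ‖p‖ ^ 2))⁻¹) ^ 3 * inner ℝ p y) • p := by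
  have hpos := sq_add_norm_sq_pos hε p
  have h1 : HasFDerivAt (fun p : E => ε ^ 2 + ‖p‖ ^ 2) (2 • innerSL ℝ p) p :=
    (hasStrictFDerivAt_norm_sq p).hasFDerivAt.const_add _
  have hs : 0 < Real.sqrt (ε ^ 2 + ‖p‖ ^ 2) := Real.sqrt_pos.2 hpos
  have h2 := ((hasDerivAt_inv hs.ne').comp_hasFDerivAt p (h1.sqrt hpos.ne')).smul (hasFDerivAt_id p)
  have h3 : fderiv ℝ (flux ε) p = _ := h2.fderiv
  rw [h3]
  simp only [Function.comp_apply, id_eq, add_apply,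
    smul_apply, ContinuousLinearMap.smulRight_apply,
    ContinuousLinearMap.id_apply, innerSL_apply_apply, smul_eq_mul, nsmul_eq_mul, sub_eq_add_neg,
    ← neg_smul]
  congr 2
  field_simp
  norm_num

lemma isSymmetric_fderiv_flux (hε : 0 < ε) (p : E) :
    (fderiv ℝ (flux ε) p : E →ₗ[ℝ] E).IsSymmetric := by
  intro y z
  simp only [ContinuousLinearMap.coe_coe, fderiv_flux_apply hε, inner_sub_left, inner_sub_right,
    real_inner_smul_left, real_inner_smul_right, real_inner_comm p y]
  ring

lemma inner_fderiv_flux_pos (hε : 0 < ε) (p : E) {y : E} (hy : y ≠ 0) :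
    0 < inner ℝ (fderiv ℝ (flux ε) p y) y := by
  have hpos := sq_add_norm_sq_pos hε p
  set s := Real.sqrt (ε ^ 2 + ‖p‖ ^ 2) with hs
  have hspos : 0 < s := Real.sqrt_pos.2 hpos
  have hsq : s ^ 2 = ε ^ 2 + ‖p‖ ^ 2 := Real.sq_sqrt hpos.le
  rw [fderiv_flux_apply hε, inner_sub_left, real_inner_smul_left, real_inner_smul_left,
    real_inner_self_eq_norm_sq, ← hs]
  have hcs : inner ℝ p y ^ 2 ≤ ‖p‖ ^ 2 * ‖y‖ ^ 2 := by
    rw [← mul_pow]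
    exact sq_le_sq' (neg_le_of_abs_le (abs_real_inner_le_norm p y)) (real_inner_le_norm p y)
  have hy' : 0 < ‖y‖ ^ 2 := by positivity
  have heq : s⁻¹ * ‖y‖ ^ 2 - s⁻¹ ^ 3 * inner ℝ p y * inner ℝ p y
      = s⁻¹ ^ 3 * (s ^ 2 * ‖y‖ ^ 2 - inner ℝ p y ^ 2) := by
    field_simp
  rw [heq, hsq]
  have : 0 < ε ^ 2 * ‖y‖ ^ 2 := by positivity
  refine mul_pos (by positivity) ?_
  nlinarith

end Flux

section GradC

variable {n : ℕ} {Ω : Set (EuclideanSpace ℝ (Fin (n + 1)))}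
  {u : EuclideanSpace ℝ (Fin (n + 1)) → ℝ}

lemma gradC_eventuallyEq_gradient (hΩ : IsOpen Ω) {x : EuclideanSpace ℝ (Fin (n + 1))}
    (hx : x ∈ Ω) : gradC Ω u =ᶠ[𝓝 x] fun y =>
      (InnerProductSpace.toDual ℝ (EuclideanSpace ℝ (Fin (n + 1)))).symm (fderiv ℝ u y) := by
  filter_upwards [hΩ.mem_nhds hx] with y hy
  rw [gradC, fderivWithin_of_mem_nhds (mem_of_superset (hΩ.mem_nhds hy) subset_closure)]

lemma contDiffOn_gradC (hΩ : IsOpen Ω) (hu : ContDiffOn ℝ 3 u (closure Ω)) :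
    ContDiffOn ℝ 2 (gradC Ω u) Ω := by
  have h1 : ContDiffOn ℝ 2 (fderiv ℝ u) Ω :=
    (hu.mono subset_closure).fderiv_of_isOpen hΩ (by norm_num)
  intro x hx
  have h2 := (InnerProductSpace.toDual ℝ
    (EuclideanSpace ℝ (Fin (n + 1)))).symm.contDiff.contDiffAt.comp x
      (h1.contDiffAt (hΩ.mem_nhds hx))
  exact (h2.congr_of_eventuallyEq (gradC_eventuallyEq_gradient hΩ hx)).contDiffWithinAt

lemma isSymmetric_fderiv_gradC (hΩ : IsOpen Ω) (hu : ContDiffOn ℝ 2 u (closure Ω))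
    {x : EuclideanSpace ℝ (Fin (n + 1))} (hx : x ∈ Ω) :
    (fderiv ℝ (gradC Ω u) x : EuclideanSpace ℝ (Fin (n + 1)) →ₗ[ℝ]
      EuclideanSpace ℝ (Fin (n + 1))).IsSymmetric := by
  have hux : ContDiffAt ℝ 2 u x := (hu.mono subset_closure).contDiffAt (hΩ.mem_nhds hx)
  have h1 : HasFDerivAt (fderiv ℝ u) (fderiv ℝ (fderiv ℝ u) x) x :=
    ((hux.fderiv_right (m := 1) (by norm_num)).differentiableAt (by norm_num)).hasFDerivAt
  have h2 := ((InnerProductSpace.toDual ℝ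
    (EuclideanSpace ℝ (Fin (n + 1)))).symm.toContinuousLinearEquiv.hasFDerivAt.comp x h1)
  have h3 : ∀ y z, inner ℝ (fderiv ℝ (gradC Ω u) x y) z = fderiv ℝ (fderiv ℝ u) x y z := by
    intro y z
    have h4 := (h2.congr_of_eventuallyEq (gradC_eventuallyEq_gradient hΩ hx)).fderiv
    rw [h4]
    exact InnerProductSpace.toDual_symm_apply
  intro y z
  have h4 : IsSymmSndFDerivAt ℝ u x := hux.isSymmSndFDerivAt (by simp)
  rw [ContinuousLinearMap.coe_coe, h3, real_inner_comm, h3, h4 y z]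

lemma continuousOn_gradC (hΩ : IsOpen Ω) (hu : ContDiffOn ℝ 1 u (closure Ω))
    (hu0 : ∀ x ∈ frontier Ω, u x = 0) : ContinuousOn (gradC Ω u) (closure Ω) :=
  (InnerProductSpace.toDual ℝ
    (EuclideanSpace ℝ (Fin (n + 1)))).symm.continuous.comp_continuousOn
      (continuousOn_fderivWithin_closure hΩ hu hu0)

end GradC

/-- **Interior gradient estimate** (Lemma 3.2, flat ambient space): for any solution `u` of
`(★★)_ε` one has `sup_Ω |∇u| ≤ sup_{∂Ω} (1 + √(ε² + |∇u|²))`, the gradient on `∂Ω`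
denoting the continuous extension of the gradient of `u`. -/
theorem interior_gradient_estimate (n : ℕ) (hn : 1 ≤ n) (k : ℝ) (hk : 1 ≤ k)
    (ε : ℝ) (hε : ε ∈ Ioc (0 : ℝ) 1)
    (Ω : Set (EuclideanSpace ℝ (Fin (n + 1)))) (hΩo : IsOpen Ω)
    (hΩb : Bornology.IsBounded Ω)
    (u : EuclideanSpace ℝ (Fin (n + 1)) → ℝ)
    (hu : IsRegularizedSolution n k ε Ω u) :
    ∀ x ∈ Ω, ‖gradC Ω u x‖ ≤
      sSup ((fun y => 1 + Real.sqrt (ε ^ 2 + ‖gradC Ω u y‖ ^ 2)) '' frontier Ω) := by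
  obtain ⟨hsmooth, hpde, hu0⟩ := hu
  have hε0 := hε.1
  have hle : ∀ N : ℕ, ContDiffOn ℝ N u (closure Ω) := fun N =>
    hsmooth.of_le (by exact_mod_cast le_top)
  have hGc := continuousOn_gradC hΩo (by exact_mod_cast hle 1) hu0
  have hG2 : ContDiffOn ℝ 2 (gradC Ω u) Ω := contDiffOn_gradC hΩo (by exact_mod_cast hle 3)
  intro x hx
  set M := sSup ((fun y => 1 + Real.sqrt (ε ^ 2 + ‖gradC Ω u y‖ ^ 2)) '' frontier Ω) with hM
  have hfc : IsCompact (frontier Ω) :=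
    hΩb.isCompact_closure.of_isClosed_subset isClosed_frontier frontier_subset_closure
  have hcont : ContinuousOn (fun y => 1 + Real.sqrt (ε ^ 2 + ‖gradC Ω u y‖ ^ 2)) (frontier Ω) :=
    continuousOn_const.add
      (continuousOn_const.add ((hGc.mono frontier_subset_closure).norm.pow 2)).sqrt
  have hbdd := (hfc.image_of_continuousOn hcont).bddAbove
  have hnorm : ∀ y ∈ frontier Ω, ‖gradC Ω u y‖ ≤ M := by
    intro y hy
    have h1 := le_csSup hbdd (mem_image_of_mem _ hy)
    have h2 : ‖gradC Ω u y‖ ≤ Real.sqrt (ε ^ 2 + ‖gradC Ω u y‖ ^ 2) :=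
      Real.le_sqrt_of_sq_le (le_add_of_nonneg_left (sq_nonneg ε))
    have h3 : 1 + Real.sqrt (ε ^ 2 + ‖gradC Ω u y‖ ^ 2) ≤ M := h1
    linarith
  rcases eq_or_ne (gradC Ω u x) 0 with h0 | h0
  · rw [h0, norm_zero]
    refine Real.sSup_nonneg ?_
    rintro _ ⟨y, -, rfl⟩
    positivity
  have hflux : ∀ z ∈ Ω, traceCLM _ (fderiv ℝ (flux ε) (gradC Ω u z) ∘L fderiv ℝ (gradC Ω u) z)
      = -((ε ^ 2 + ‖gradC Ω u z‖ ^ 2) ^ (-(1 : ℝ) / (2 * k))) := by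
    intro z hz
    rw [← hpde z hz, vdiv, traceCLM_apply]
    have h1 := (((contDiff_flux hε0 (n := 1)).differentiable (by norm_num))
      (gradC Ω u z)).hasFDerivAt.comp z
        ((hG2.contDiffAt (hΩo.mem_nhds hz)).differentiableAt (by norm_num)).hasFDerivAt
    exact congrArg _ (congrArg _ h1.fderiv.symm)
  have hg : ContDiff ℝ 1 fun p : EuclideanSpace ℝ (Fin (n + 1)) =>
      -((ε ^ 2 + ‖p‖ ^ 2) ^ (-(1 : ℝ) / (2 * k))) :=
    ((contDiff_const.add (contDiff_norm_sq ℝ)).rpow_const_of_ne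
      fun p => (sq_add_norm_sq_pos hε0 p).ne').neg
  have hmain := inner_le_of_forall_frontier_inner_le hΩo hΩb hGc hG2
    (fun z hz => isSymmetric_fderiv_gradC hΩo (by exact_mod_cast hle 2) hz)
    ((contDiff_flux hε0 (n := 2)).fderiv_right (by norm_num))
    (isSymmetric_fderiv_flux hε0) (fun p y hy => inner_fderiv_flux_pos hε0 p hy) hg hflux h0
    (m := M * ‖gradC Ω u x‖)
    (fun y hy => (real_inner_le_norm _ _).trans
      (mul_le_mul_of_nonneg_right (hnorm y hy) (norm_nonneg _))) hx
  rw [real_inner_self_eq_norm_mul_norm] at hmain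
  exact le_of_mul_le_mul_right hmain (norm_pos_iff.2 h0)
end

section
/- Let n ≥ 1, k ≥ 1, and let Ω ⊂ ℝ^{n+1} be a bounded open set. Let δ₀, δ₁ > 0 be such that the distance function d(p) := dist(p, ∂Ω) is smooth on the collar Ω_{δ₁} := {p ∈ Ω : d(p) < δ₁} (including up to ∂Ω) and satisfies −Δd ≥ δ₀/2 on Ω_{δ₁} (this encodes a positive lower bound δ₀/2 on the mean curvature of the level sets {d = r}). Let C₁ > 0 and set C₂ := max(2^{(3k−1)/2} δ₀^{−k}, δ₁^{−1} C₁) and ε₀ := min(C₂, 1). Then for every ε ∈ (0, ε₀) and every solution u of the regularised level-set equation (★★)_ε on Ω with 0 ≤ u ≤ C₁ on Ω, one has sup_{∂Ω} |∇u| ≤ C₂, where ∇u denotes the continuous extension of the gradient of u to ∂Ω. -/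
open MeasureTheory Metric Set

open Filter Topology

open scoped InnerProductSpace

/-- The distance to a closed set has a derivative of norm one wherever it is differentiable off
the set. -/
lemma norm_eq_one_of_hasFDerivAt_infDist {E : Type*} [NormedAddCommGroup E] [NormedSpace ℝ E]
    [ProperSpace E] {s : Set E} (hs : IsClosed s) (hne : s.Nonempty) {x : E} (hx : x ∉ s)
    {L : E →L[ℝ] ℝ} (hL : HasFDerivAt (fun p => infDist p s) L x) : ‖L‖ = 1 := by
  refine le_antisymm (by simpa using hL.le_of_lipschitz (lipschitz_infDist_pt s)) ?_
  obtain ⟨p, hp, hxp⟩ := hs.exists_infDist_eq_dist hne x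
  have hpos : 0 < ‖p - x‖ := by
    rw [norm_pos_iff, sub_ne_zero]
    rintro rfl
    exact hx hp
  have hLip : ‖p - x‖ ≤ L (x - p) := by
    have hcurve : HasDerivAt (fun t : ℝ => infDist (x + t • (p - x)) s) (L (p - x)) 0 := by
      have h : HasDerivAt (fun t : ℝ => x + t • (p - x)) (p - x) 0 := by
        simpa using ((hasDerivAt_id (0 : ℝ)).smul_const (p - x)).const_add x
      exact HasFDerivAt.comp_hasDerivAt (x := (0 : ℝ)) (l := fun p => infDist p s)
        (by simpa using hL) h
    have hmax : IsLocalMaxOn (fun t : ℝ => infDist (x + t • (p - x)) s + t * ‖p - x‖)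
        (Icc 0 1) 0 := by
      refine eventually_nhdsWithin_of_forall fun t ht => ?_
      have h1 := infDist_le_dist_of_mem (x := x + t • (p - x)) hp
      have h2 : dist (x + t • (p - x)) p = (1 - t) * ‖p - x‖ := by
        rw [dist_eq_norm, ← norm_neg]
        have : -(x + t • (p - x) - p) = (1 - t) • (p - x) := by module
        rw [this, norm_smul, Real.norm_of_nonneg (by linarith [ht.2])]
      have h3 : dist x p = ‖p - x‖ := by rw [dist_comm, dist_eq_norm]
      simp only [zero_smul, add_zero, zero_mul, hxp, h3]
      linarith
    have hd := hcurve.add ((hasDerivAt_id (0 : ℝ)).mul_const ‖p - x‖)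
    have := hmax.hasFDerivWithinAt_nonpos (y := 1) hd.hasFDerivAt.hasFDerivWithinAt
      (mem_posTangentConeAt_of_segment_subset (by simp [segment_eq_Icc]))
    simp only [one_mul, ContinuousLinearMap.toSpanSingleton_apply, one_smul] at this
    rw [← neg_sub p x, map_neg]
    linarith
  have := hLip.trans ((le_abs_self _).trans (L.le_opNorm (x - p)))
  rw [norm_sub_rev x p] at this
  exact le_of_mul_le_mul_right (by simpa using this) hpos

/-- At a local maximum, the derivative of the gradient is negative semidefinite. -/
lemma IsLocalMax.inner_fderiv_gradient_nonpos {E : Type*} [NormedAddCommGroup E]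
    [InnerProductSpace ℝ E] [CompleteSpace E] {w : E → ℝ} {G : E → E} {H : E →L[ℝ] E} {x : E}
    (hmax : IsLocalMax w x) (hG : ∀ᶠ z in 𝓝 x, HasGradientAt w (G z) z)
    (hH : HasFDerivAt G H x) (v : E) : ⟪v, H v⟫_ℝ ≤ 0 := by
  by_contra! hpos
  have hline (t : ℝ) : HasDerivAt (fun t : ℝ => x + t • v) v t := by
    simpa using ((hasDerivAt_id t).smul_const v).const_add x
  have htend : Tendsto (fun t : ℝ => x + t • v) (𝓝 0) (𝓝 x) := by
    simpa using (hline 0).continuousAt.tendsto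
  have hφ : ∀ᶠ t : ℝ in 𝓝 0, HasDerivAt (fun t : ℝ => w (x + t • v)) ⟪v, G (x + t • v)⟫_ℝ t := by
    filter_upwards [htend.eventually hG] with t ht
    have := ht.hasFDerivAt.comp_hasDerivAt t (hline t)
    rw [InnerProductSpace.toDual_apply_apply, real_inner_comm] at this
    exact this
  have hφ' : HasDerivAt (fun t : ℝ => ⟪v, G (x + t • v)⟫_ℝ) ⟪v, H v⟫_ℝ 0 := by
    have h : HasDerivAt (fun t : ℝ => G (x + t • v)) (H v) 0 :=
      HasFDerivAt.comp_hasDerivAt (x := (0 : ℝ)) (l := G) (by simpa using hH) (hline 0)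
    simpa using (hasDerivAt_const (0 : ℝ) v).inner ℝ h
  have hderiv : deriv (fun t : ℝ => w (x + t • v)) =ᶠ[𝓝 0] fun t => ⟪v, G (x + t • v)⟫_ℝ :=
    hφ.mono fun t ht => ht.deriv
  have hmax' : IsLocalMax (fun t : ℝ => w (x + t • v)) 0 := by
    have := htend.eventually hmax
    simpa [IsLocalMax, IsMaxFilter] using this
  have hdd : deriv (deriv fun t : ℝ => w (x + t • v)) 0 = ⟪v, H v⟫_ℝ := by
    rw [hderiv.deriv_eq, hφ'.deriv]
  have hmin := isLocalMin_of_deriv_deriv_pos (hdd ▸ hpos) hmax'.deriv_eq_zero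
    hφ.self_of_nhds.continuousAt
  have hconst : (fun t : ℝ => w (x + t • v)) =ᶠ[𝓝 0] fun _ => w (x + (0 : ℝ) • v) := by
    filter_upwards [hmax', hmin] with t h1 h2 using le_antisymm h1 h2
  have : deriv (deriv fun t : ℝ => w (x + t • v)) 0 = 0 := by
    rw [hconst.deriv.deriv_eq]
    simp
  exact hpos.ne' (hdd ▸ this)

/-- The derivative of the flux `p ↦ p / √(ε² + |p|²)`. -/
lemma hasFDerivAt_inv_sqrt_smul {E : Type*} [NormedAddCommGroup E] [InnerProductSpace ℝ E]
    {ε : ℝ} (hε : 0 < ε) (g : E) :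
    HasFDerivAt (fun p : E => (√(ε ^ 2 + ‖p‖ ^ 2))⁻¹ • p)
      ((√(ε ^ 2 + ‖g‖ ^ 2))⁻¹ • (ContinuousLinearMap.id ℝ E -
        ((ε ^ 2 + ‖g‖ ^ 2)⁻¹ • innerSL ℝ g).smulRight g)) g := by
  have hpos : 0 < ε ^ 2 + ‖g‖ ^ 2 := by positivity
  have h1 : HasFDerivAt (fun p : E => ε ^ 2 + ‖p‖ ^ 2) (2 • innerSL ℝ g) g := by
    simpa using ((hasStrictFDerivAt_norm_sq g).hasFDerivAt).const_add (ε ^ 2)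
  have h2 := ((hasDerivAt_inv (Real.sqrt_pos.2 hpos).ne').comp_hasFDerivAt g (h1.sqrt hpos.ne')).smul
    (hasFDerivAt_id g)
  refine h2.congr_fderiv ?_
  have hs := Real.sq_sqrt hpos.le
  have hs0 := Real.sqrt_pos.2 hpos
  ext v
  simp
  generalize √(ε ^ 2 + ‖g‖ ^ 2) = s at *
  rw [← hs]
  module

/-- The trace of a negative semidefinite operator stays nonpositive after composition with
`1 - g ⊗ g / (ε² + |g|²)`. -/
lemma trace_sub_rankOne_comp_nonpos {E : Type*} [NormedAddCommGroup E] [InnerProductSpace ℝ E]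
    [FiniteDimensional ℝ E] {ε : ℝ} (hε : 0 < ε) {g : E} (hg : g ≠ 0) {H : E →L[ℝ] E}
    (hH : ∀ v, ⟪v, H v⟫_ℝ ≤ 0) :
    LinearMap.trace ℝ E (((ContinuousLinearMap.id ℝ E -
        ((ε ^ 2 + ‖g‖ ^ 2)⁻¹ • innerSL ℝ g).smulRight g).comp H : E →L[ℝ] E) : E →ₗ[ℝ] E) ≤ 0 := by
  have hpos : 0 < ε ^ 2 + ‖g‖ ^ 2 := by positivity
  have hg' : 0 < ‖g‖ := norm_pos_iff.2 hg
  set s := √(ε ^ 2 + ‖g‖ ^ 2)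
  have hs : s ^ 2 = ε ^ 2 + ‖g‖ ^ 2 := Real.sq_sqrt hpos.le
  have hs0 : 0 < s := Real.sqrt_pos.2 hpos
  set c := (1 - ε / s) / ‖g‖ ^ 2
  set R : E →L[ℝ] E := ContinuousLinearMap.id ℝ E - (c • innerSL ℝ g).smulRight g with hR
  have hc : 2 * c - c ^ 2 * ‖g‖ ^ 2 = (ε ^ 2 + ‖g‖ ^ 2)⁻¹ := by
    rw [← hs]
    simp only [c]
    field_simp
    linear_combination hs
  have hRR : ContinuousLinearMap.id ℝ E - ((ε ^ 2 + ‖g‖ ^ 2)⁻¹ • innerSL ℝ g).smulRight g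
      = R.comp R := by
    rw [← hc]
    ext v
    simp [hR]
    module
  have hsymm (v w : E) : ⟪v, R w⟫_ℝ = ⟪R v, w⟫_ℝ := by
    simp [hR, inner_sub_left, inner_sub_right, inner_smul_left, inner_smul_right,
      real_inner_comm v g]
    ring
  rw [hRR]
  have hcyc : LinearMap.trace ℝ E (((R.comp R).comp H : E →L[ℝ] E) : E →ₗ[ℝ] E)
      = LinearMap.trace ℝ E ((R : E →ₗ[ℝ] E) ∘ₗ (H : E →ₗ[ℝ] E) ∘ₗ (R : E →ₗ[ℝ] E)) :=
    LinearMap.trace_comp_comm' ((R.comp H : E →L[ℝ] E) : E →ₗ[ℝ] E) (R : E →ₗ[ℝ] E)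
  rw [hcyc, LinearMap.trace_eq_sum_inner _ (stdOrthonormalBasis ℝ E)]
  refine Finset.sum_nonpos fun i _ => ?_
  simpa [hsymm] using hH (R (stdOrthonormalBasis ℝ E i))

/-- If `d` vanishes on the boundary of `Ω`, is positive inside, and increases in the direction `v`
near a boundary point `y`, then `v` points into `Ω` at `y`. -/
lemma mem_posTangentConeAt_closure_of_fderiv_pos {E : Type*} [NormedAddCommGroup E]
    [NormedSpace ℝ E] {Ω : Set E} (hΩ : IsOpen Ω) {d : E → ℝ} (hd : Continuous d)
    (hdΩ : ∀ x ∈ Ω, 0 < d x) (hd0 : ∀ x ∈ frontier Ω, d x = 0) {y v : E} (hy : y ∈ frontier Ω)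
    (hv : ∀ᶠ x in 𝓝[Ω] y, 0 < fderiv ℝ d x v) : v ∈ posTangentConeAt (closure Ω) y := by
  obtain ⟨r, hr, hball⟩ := Metric.mem_nhdsWithin_iff.1 hv
  have hstay : ∀ x ∈ Ω, ∀ T : ℝ, 0 ≤ T → dist x y + T * ‖v‖ < r → x + T • v ∈ Ω := by
    intro x hx T hT hxT
    by_contra hout
    have hcont : Continuous fun t : ℝ => x + t • v := by fun_prop
    obtain ⟨τ, ⟨hτ, hτout⟩, hleast⟩ :=
      (isCompact_Icc.inter_right (hΩ.isClosed_compl.preimage hcont)).exists_isLeast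
        ⟨T, ⟨hT, le_rfl⟩, hout⟩
    have hin : ∀ t ∈ Ico 0 τ, x + t • v ∈ Ω := fun t ht => by
      by_contra h
      exact absurd (hleast ⟨⟨ht.1, ht.2.le.trans hτ.2⟩, h⟩) (not_le.2 ht.2)
    have hτ0 : 0 < τ := by
      refine lt_of_le_of_ne hτ.1 ?_
      rintro rfl
      exact hτout (by simpa using hx)
    have hfr : x + τ • v ∈ frontier Ω := by
      rw [hΩ.frontier_eq]
      refine ⟨?_, hτout⟩
      have : τ ∈ closure (Ico 0 τ) := by
        rw [closure_Ico hτ0.ne]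
        exact ⟨hτ0.le, le_rfl⟩
      exact map_mem_closure (f := fun t : ℝ => x + t • v) hcont this hin
    have hmono : StrictMonoOn (fun t : ℝ => d (x + t • v)) (Icc 0 τ) := by
      refine strictMonoOn_of_deriv_pos (convex_Icc 0 τ) (hd.comp hcont).continuousOn fun t ht => ?_
      rw [interior_Icc] at ht
      have hpos : 0 < fderiv ℝ d (x + t • v) v := by
        refine hball ⟨?_, hin t ⟨ht.1.le, ht.2⟩⟩
        have h1 : dist (x + t • v) x = t * ‖v‖ := by
          simp [dist_eq_norm, norm_smul, abs_of_pos ht.1]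
        have h2 : t * ‖v‖ ≤ T * ‖v‖ := by gcongr; exact ht.2.le.trans hτ.2
        rw [mem_ball]
        linarith [dist_triangle (x + t • v) x y]
      have hdiff : DifferentiableAt ℝ d (x + t • v) := by
        by_contra h
        simp [fderiv_zero_of_not_differentiableAt h] at hpos
      have hline : HasDerivAt (fun t : ℝ => x + t • v) v t := by
        simpa using ((hasDerivAt_id t).smul_const v).const_add x
      have h := hdiff.hasFDerivAt.comp_hasDerivAt t hline
      exact h.deriv.symm ▸ hpos
    have := hmono ⟨le_rfl, hτ0.le⟩ ⟨hτ0.le, le_rfl⟩ hτ0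
    simp only [zero_smul, add_zero, hd0 _ hfr] at this
    exact absurd this (not_lt.2 (hdΩ x hx).le)
  refine mem_posTangentConeAt_of_frequently_mem (Eventually.frequently ?_)
  have hsmall : ∀ᶠ t : ℝ in 𝓝[>] 0, t * ‖v‖ < r := by
    refine nhdsWithin_le_nhds (Tendsto.eventually_lt_const hr ?_)
    simpa using (tendsto_id (x := 𝓝 (0 : ℝ))).mul_const ‖v‖
  filter_upwards [hsmall, self_mem_nhdsWithin] with t ht ht0
  have hyc : y ∈ closure (Metric.ball y (r - t * ‖v‖) ∩ Ω) :=
    Metric.isOpen_ball.inter_closure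
      ⟨mem_ball_self (by linarith), frontier_subset_closure hy⟩
  refine map_mem_closure (f := fun z => z + t • v) (by fun_prop) hyc fun z hz => ?_
  refine hstay z hz.2 t (le_of_lt ht0) ?_
  have := mem_ball.1 hz.1
  linarith

/-- A functional squeezed between `0` and `β M` on the half-space `{M > 0}` of a unit functional
`M` has norm at most `β`. -/
lemma norm_le_of_nonneg_of_le_on_halfSpace {E : Type*} [NormedAddCommGroup E]
    [InnerProductSpace ℝ E] [CompleteSpace E] {L M : E →L[ℝ] ℝ} {β : ℝ} (hβ : 0 ≤ β)
    (hM : ‖M‖ = 1) (h : ∀ v, 0 < M v → 0 ≤ L v ∧ L v ≤ β * M v) : ‖L‖ ≤ β := by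
  obtain ⟨w, rfl⟩ := (InnerProductSpace.toDual ℝ E).surjective L
  obtain ⟨ν, rfl⟩ := (InnerProductSpace.toDual ℝ E).surjective M
  simp only [LinearIsometryEquiv.norm_map, InnerProductSpace.toDual_apply_apply] at *
  rcases le_or_gt ⟪ν, w⟫_ℝ 0 with hw | hw
  · have h1 := (h (ν - w) (by rw [inner_sub_right, real_inner_self_eq_norm_sq, hM]; linarith)).1
    rw [inner_sub_right, real_inner_self_eq_norm_sq, real_inner_comm] at h1
    have : ‖w‖ = 0 := by nlinarith [norm_nonneg w]
    linarith
  · have h1 := (h w hw).2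
    have h2 := real_inner_le_norm ν w
    rw [real_inner_self_eq_norm_sq] at h1
    rw [hM, one_mul] at h2
    by_contra! hlt
    nlinarith [norm_nonneg w]

/-- The barrier `β d` has strictly negative defect once `β` exceeds `2^{(3k-1)/2} δ₀^{-k}`. -/
lemma rpow_lt_of_barrier_slope {k δ₀ β ε : ℝ} (hk : 1 ≤ k) (hδ₀ : 0 < δ₀) (hε : 0 < ε)
    (hεβ : ε < β) (hβ : (2 : ℝ) ^ ((3 * k - 1) / 2) * δ₀ ^ (-k) < β) :
    (ε ^ 2 + β ^ 2) ^ (-(1 : ℝ) / (2 * k)) < (√(ε ^ 2 + β ^ 2))⁻¹ * β * (δ₀ / 2) := by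
  have hβ0 : 0 < β := hε.trans hεβ
  have hk0 : 0 < k := by linarith
  set S := ε ^ 2 + β ^ 2 with hS
  have hS0 : 0 < S := by positivity
  have hSβ : S < 2 * β ^ 2 := by nlinarith
  have hlogβ : (3 * k - 1) / 2 * Real.log 2 - k * Real.log δ₀ < Real.log β := by
    have := Real.log_lt_log (by positivity) hβ
    rw [Real.log_mul (by positivity) (by positivity), Real.log_rpow (by norm_num),
      Real.log_rpow hδ₀] at this
    linarith
  have hlogS : Real.log S < Real.log 2 + 2 * Real.log β := by
    have := Real.log_lt_log hS0 hSβ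
    rw [Real.log_mul (by norm_num) (by positivity), Real.log_pow] at this
    simpa using this
  rw [← Real.log_lt_log_iff (by positivity) (by positivity), Real.log_rpow hS0,
    Real.log_mul (by positivity) (by positivity), Real.log_mul (by positivity) (by positivity),
    Real.log_inv, Real.log_sqrt hS0.le, Real.log_div (by positivity) (by norm_num)]
  have e : -(1 : ℝ) / (2 * k) * Real.log S = - Real.log S / (2 * k) := by ring
  rw [e, div_lt_iff₀ (by positivity)]
  nlinarith

lemma ContDiffAt.differentiableAt_gradient {E : Type*} [NormedAddCommGroup E]
    [InnerProductSpace ℝ E] [CompleteSpace E] {f : E → ℝ} {x : E} (hf : ContDiffAt ℝ 2 f x) :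
    DifferentiableAt ℝ (gradient f) x :=
  (InnerProductSpace.toDual ℝ E).symm.differentiable.differentiableAt.comp x
    ((hf.fderiv_right (m := 1) (by norm_num)).differentiableAt one_ne_zero)

/-- Comparison of the regularised mean curvature operators of two functions touching at `x`. -/
lemma vdiv_flux_le_of_isLocalMax_sub {n : ℕ} {ε : ℝ} (hε : 0 < ε)
    {u φ : EuclideanSpace ℝ (Fin (n + 1)) → ℝ} {x : EuclideanSpace ℝ (Fin (n + 1))}
    (hu : ContDiffAt ℝ 2 u x) (hφ : ContDiffAt ℝ 2 φ x)
    (hmax : IsLocalMax (fun z => u z - φ z) x) (hg : gradient φ x ≠ 0) :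
    gradient u x = gradient φ x ∧
    vdiv (fun z => (√(ε ^ 2 + ‖gradient u z‖ ^ 2))⁻¹ • gradient u z) x
      ≤ vdiv (fun z => (√(ε ^ 2 + ‖gradient φ z‖ ^ 2))⁻¹ • gradient φ z) x := by
  have hGu := hu.differentiableAt_gradient.hasFDerivAt
  have hGφ := hφ.differentiableAt_gradient.hasFDerivAt
  have hgrad : ∀ᶠ z in 𝓝 x,
      HasGradientAt (fun z => u z - φ z) (gradient u z - gradient φ z) z := by
    filter_upwards [hu.eventually (by simp), hφ.eventually (by simp)] with z h1 h2
    rw [hasGradientAt_iff_hasFDerivAt, map_sub]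
    exact (h1.differentiableAt two_ne_zero).hasGradientAt.hasFDerivAt.fun_sub
      (h2.differentiableAt two_ne_zero).hasGradientAt.hasFDerivAt
  have hzero : gradient u x = gradient φ x := by
    have := hmax.hasFDerivAt_eq_zero hgrad.self_of_nhds.hasFDerivAt
    exact sub_eq_zero.1 ((InnerProductSpace.toDual ℝ _).map_eq_zero_iff.1 this)
  refine ⟨hzero, ?_⟩
  have hH := hmax.inner_fderiv_gradient_nonpos hgrad (hGu.fun_sub hGφ)
  have hAu := (hasFDerivAt_inv_sqrt_smul hε (gradient u x)).comp x hGu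
  have hAφ := (hasFDerivAt_inv_sqrt_smul hε (gradient φ x)).comp x hGφ
  rw [hzero] at hAu
  have hu' : vdiv (fun z => (√(ε ^ 2 + ‖gradient u z‖ ^ 2))⁻¹ • gradient u z) x = _ :=
    congrArg (fun T : EuclideanSpace ℝ (Fin (n + 1)) →L[ℝ] EuclideanSpace ℝ (Fin (n + 1)) =>
      LinearMap.trace ℝ (EuclideanSpace ℝ (Fin (n + 1))) T.toLinearMap) hAu.fderiv
  have hφ' : vdiv (fun z => (√(ε ^ 2 + ‖gradient φ z‖ ^ 2))⁻¹ • gradient φ z) x = _ :=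
    congrArg (fun T : EuclideanSpace ℝ (Fin (n + 1)) →L[ℝ] EuclideanSpace ℝ (Fin (n + 1)) =>
      LinearMap.trace ℝ (EuclideanSpace ℝ (Fin (n + 1))) T.toLinearMap) hAφ.fderiv
  have htr := trace_sub_rankOne_comp_nonpos hε hg hH
  rw [hu', hφ', ← sub_nonpos, ← map_sub, ← ContinuousLinearMap.toLinearMap_sub,
    ← ContinuousLinearMap.comp_sub, ContinuousLinearMap.smul_comp,
    ContinuousLinearMap.toLinearMap_smul, map_smul, smul_eq_mul]
  exact mul_nonpos_of_nonneg_of_nonpos (by positivity) htr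

lemma gradC_eq_gradient {n : ℕ} {Ω : Set (EuclideanSpace ℝ (Fin (n + 1)))} (hΩ : IsOpen Ω)
    (u : EuclideanSpace ℝ (Fin (n + 1)) → ℝ) {x : EuclideanSpace ℝ (Fin (n + 1))} (hx : x ∈ Ω) :
    gradC Ω u x = gradient u x := by
  rw [gradC, gradient, fderivWithin_of_mem_nhds (mem_of_superset (hΩ.mem_nhds hx) subset_closure)]

/-- A solution of the regularised equation cannot be touched from above, inside the collar, by the
barrier `β d` with `d` the distance to the boundary. -/
lemma IsRegularizedSolution.not_isLocalMax_sub_barrier {n : ℕ} {k ε δ₀ δ₁ β : ℝ}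
    {Ω : Set (EuclideanSpace ℝ (Fin (n + 1)))} {u : EuclideanSpace ℝ (Fin (n + 1)) → ℝ}
    (hu : IsRegularizedSolution n k ε Ω u) (hk : 1 ≤ k) (hΩ : IsOpen Ω) (hδ₀ : 0 < δ₀)
    (hne : (frontier Ω).Nonempty)
    (hd_smooth : ContDiffOn ℝ (⊤ : ℕ∞) (fun p => infDist p (frontier Ω))
      {p ∈ closure Ω | infDist p (frontier Ω) < δ₁})
    (hd_mean : ∀ p ∈ Ω, infDist p (frontier Ω) < δ₁ →
      δ₀ / 2 ≤ -vdiv (gradient (fun q => infDist q (frontier Ω))) p)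
    (hε : 0 < ε) (hεβ : ε < β) (hβ : (2 : ℝ) ^ ((3 * k - 1) / 2) * δ₀ ^ (-k) < β)
    {x : EuclideanSpace ℝ (Fin (n + 1))} (hx : x ∈ Ω) (hxδ : infDist x (frontier Ω) < δ₁) :
    ¬ IsLocalMax (fun z => u z - β * infDist z (frontier Ω)) x := by
  intro hmax
  obtain ⟨hus, hueq, -⟩ := hu
  set d := fun q : EuclideanSpace ℝ (Fin (n + 1)) => infDist q (frontier Ω)
  have hβ0 : 0 < β := hε.trans hεβ
  have hdc : Continuous d := continuous_infDist_pt _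
  have hcollar : ∀ᶠ z in 𝓝 x, z ∈ Ω ∧ d z < δ₁ :=
    (hΩ.eventually_mem hx).and (hdc.continuousAt.eventually_lt continuousAt_const hxδ)
  have hd2 : ∀ z, z ∈ Ω ∧ d z < δ₁ → ContDiffAt ℝ 2 d z := fun z hz => by
    refine (hd_smooth.contDiffAt ?_).of_le (WithTop.coe_le_coe.2 le_top)
    filter_upwards [hΩ.mem_nhds hz.1,
      hdc.continuousAt.eventually_lt continuousAt_const hz.2] with w h1 h2
    exact ⟨subset_closure h1, h2⟩
  have hu2 : ContDiffAt ℝ 2 u x :=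
    (hus.contDiffAt (mem_of_superset (hΩ.mem_nhds hx) subset_closure)).of_le
      (WithTop.coe_le_coe.2 le_top)
  have hdnorm : ∀ z, z ∈ Ω ∧ d z < δ₁ → ‖gradient d z‖ = 1 := fun z hz => by
    have hzf : z ∉ frontier Ω := fun h => (hΩ.frontier_eq ▸ h).2 hz.1
    rw [gradient, LinearIsometryEquiv.norm_map]
    exact norm_eq_one_of_hasFDerivAt_infDist isClosed_frontier hne hzf
      ((hd2 z hz).differentiableAt two_ne_zero).hasFDerivAt
  have hgradφ : ∀ z, z ∈ Ω ∧ d z < δ₁ → gradient (fun q => β * d q) z = β • gradient d z :=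
    fun z hz => by
      rw [gradient, gradient, fderiv_const_mul ((hd2 z hz).differentiableAt two_ne_zero), map_smul]
  have hnormφ : ∀ z, z ∈ Ω ∧ d z < δ₁ → ‖gradient (fun q => β * d q) z‖ = β := fun z hz => by
    rw [hgradφ z hz, norm_smul, hdnorm z hz, mul_one, Real.norm_of_nonneg hβ0.le]
  obtain ⟨hgrad, hle⟩ := vdiv_flux_le_of_isLocalMax_sub hε hu2
    (contDiffAt_const.mul (hd2 x ⟨hx, hxδ⟩)) hmax
    (norm_pos_iff.1 (by rw [hnormφ x ⟨hx, hxδ⟩]; exact hβ0))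
  have hφ : (fun z => (√(ε ^ 2 + ‖gradient (fun q => β * d q) z‖ ^ 2))⁻¹ •
      gradient (fun q => β * d q) z) =ᶠ[𝓝 x]
      fun z => ((√(ε ^ 2 + β ^ 2))⁻¹ * β) • gradient d z := by
    filter_upwards [hcollar] with z hz
    rw [hnormφ z hz, hgradφ z hz, smul_smul]
  have huC : (fun z => (√(ε ^ 2 + ‖gradC Ω u z‖ ^ 2))⁻¹ • gradC Ω u z) =ᶠ[𝓝 x]
      fun z => (√(ε ^ 2 + ‖gradient u z‖ ^ 2))⁻¹ • gradient u z := by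
    filter_upwards [hΩ.mem_nhds hx] with z hz
    rw [gradC_eq_gradient hΩ u hz]
  have hφdiv : vdiv (fun z => (√(ε ^ 2 + ‖gradient (fun q => β * d q) z‖ ^ 2))⁻¹ •
      gradient (fun q => β * d q) z) x = (√(ε ^ 2 + β ^ 2))⁻¹ * β * vdiv (gradient d) x := by
    rw [vdiv, hφ.fderiv_eq, fderiv_fun_const_smul (hd2 x ⟨hx, hxδ⟩).differentiableAt_gradient,
      ContinuousLinearMap.toLinearMap_smul, map_smul, smul_eq_mul, vdiv]
  have hudiv := hueq x hx
  rw [vdiv, huC.fderiv_eq, ← vdiv, gradC_eq_gradient hΩ u hx, hgrad,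
    hnormφ x ⟨hx, hxδ⟩] at hudiv
  rw [hudiv, hφdiv] at hle
  have hneg := rpow_lt_of_barrier_slope hk hδ₀ hε hεβ hβ
  have hmean := mul_le_mul_of_nonneg_left (hd_mean x hx hxδ)
    (by positivity : 0 ≤ (√(ε ^ 2 + β ^ 2))⁻¹ * β)
  linarith

/-- The barrier dominates a bounded solution in the collar. -/
lemma IsRegularizedSolution.le_barrier {n : ℕ} {k ε δ₀ δ₁ β C₁ : ℝ}
    {Ω : Set (EuclideanSpace ℝ (Fin (n + 1)))} {u : EuclideanSpace ℝ (Fin (n + 1)) → ℝ}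
    (hu : IsRegularizedSolution n k ε Ω u) (hk : 1 ≤ k) (hΩ : IsOpen Ω)
    (hΩb : Bornology.IsBounded Ω) (hδ₀ : 0 < δ₀) (hδ₁ : 0 < δ₁) (hC₁ : 0 < C₁)
    (hne : (frontier Ω).Nonempty)
    (hd_smooth : ContDiffOn ℝ (⊤ : ℕ∞) (fun p => infDist p (frontier Ω))
      {p ∈ closure Ω | infDist p (frontier Ω) < δ₁})
    (hd_mean : ∀ p ∈ Ω, infDist p (frontier Ω) < δ₁ →
      δ₀ / 2 ≤ -vdiv (gradient (fun q => infDist q (frontier Ω))) p)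
    (hu_bd : ∀ x ∈ Ω, u x ≤ C₁)
    (hε : 0 < ε) (hεβ : ε < β) (hβ : (2 : ℝ) ^ ((3 * k - 1) / 2) * δ₀ ^ (-k) < β)
    (hβC : δ₁⁻¹ * C₁ < β) :
    ∃ δ > 0, ∀ x ∈ closure Ω, infDist x (frontier Ω) ≤ δ →
      u x ≤ β * infDist x (frontier Ω) := by
  have hβ0 : 0 < β := hε.trans hεβ
  have hC₁δ : C₁ / β < δ₁ := by
    rw [inv_mul_lt_iff₀ hδ₁] at hβC
    rwa [div_lt_iff₀ hβ0]
  obtain ⟨δ, hδ, hδlt⟩ := exists_between hC₁δ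
  refine ⟨δ, (by positivity : 0 < C₁ / β).trans hδ, fun x hx hxδ => ?_⟩
  have hdc : Continuous fun z => infDist z (frontier Ω) := continuous_infDist_pt _
  have hK : IsCompact (closure Ω ∩ {z | infDist z (frontier Ω) ≤ δ}) :=
    hΩb.isCompact_closure.inter_right (isClosed_le hdc continuous_const)
  obtain ⟨z, ⟨hzc, hzδ⟩, hzmax⟩ := hK.exists_isMaxOn ⟨x, hx, hxδ⟩
    (f := fun z => u z - β * infDist z (frontier Ω))
    ((hu.1.continuousOn.mono inter_subset_left).sub (hdc.const_mul β).continuousOn)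
  have hxz : u x - β * infDist x (frontier Ω) ≤ u z - β * infDist z (frontier Ω) :=
    hzmax ⟨hx, hxδ⟩
  by_cases hz : z ∈ Ω
  · rcases (show infDist z (frontier Ω) ≤ δ from hzδ).eq_or_lt with heq | hlt
    · rw [heq] at hxz
      rw [div_lt_iff₀ hβ0] at hδ
      linarith [hu_bd z hz]
    · refine absurd ?_ (hu.not_isLocalMax_sub_barrier hk hΩ hδ₀ hne hd_smooth hd_mean hε hεβ hβ
        hz (hlt.trans hδlt))
      refine hzmax.isLocalMax ?_
      filter_upwards [hΩ.mem_nhds hz,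
        hdc.continuousAt.eventually_lt continuousAt_const hlt] with w h1 h2
      exact ⟨subset_closure h1, h2.le⟩
  · have hzf : z ∈ frontier Ω := hΩ.frontier_eq ▸ ⟨hzc, hz⟩
    rw [hu.2.2 z hzf, infDist_zero_of_mem hzf] at hxz
    linarith

/-- A function that is `C¹` up to the boundary of an open set has a boundary derivative which is
the limit of its interior derivatives. -/
lemma ContDiffWithinAt.exists_tendsto_fderiv {E F : Type*} [NormedAddCommGroup E]
    [NormedSpace ℝ E] [NormedAddCommGroup F] [NormedSpace ℝ F] {Ω : Set E} (hΩ : IsOpen Ω)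
    {f : E → F} {y : E} (hy : y ∈ closure Ω) (hf : ContDiffWithinAt ℝ 1 f (closure Ω) y) :
    ∃ M : E →L[ℝ] F, HasFDerivWithinAt f M (closure Ω) y ∧
      Tendsto (fderiv ℝ f) (𝓝[Ω] y) (𝓝 M) ∧ ∀ᶠ x in 𝓝[Ω] y, DifferentiableAt ℝ f x := by
  rw [← zero_add (1 : WithTop ℕ∞), contDiffWithinAt_succ_iff_hasFDerivWithinAt' (by simp),
    insert_eq_of_mem hy] at hf
  obtain ⟨t, ht, -, -, f', hf', hcont⟩ := hf
  have hd : ∀ᶠ x in 𝓝[Ω] y, HasFDerivAt f (f' x) x := by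
    filter_upwards [nhdsWithin_mono y subset_closure ht, self_mem_nhdsWithin] with x hxt hx
    exact (hf' x hxt).hasFDerivAt (mem_of_superset (hΩ.mem_nhds hx) subset_closure)
  refine ⟨f' y, hf' y (mem_of_mem_nhdsWithin hy ht), ?_, hd.mono fun x hx => hx.differentiableAt⟩
  exact (hcont.continuousWithinAt.mono subset_closure).tendsto.congr'
    (hd.mono fun x hx => hx.fderiv.symm)

/-- If `0 ≤ u ≤ β d` near a boundary point `y`, where `d` is the distance to the boundary, `C¹` up
to the boundary, and `u = 0` on the boundary, then `|∇u(y)| ≤ β`. -/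
lemma norm_fderivWithin_closure_le_of_le_infDist {E : Type*} [NormedAddCommGroup E]
    [InnerProductSpace ℝ E] [FiniteDimensional ℝ E] {Ω : Set E} (hΩ : IsOpen Ω) {y : E}
    (hy : y ∈ frontier Ω)
    (hd : ContDiffWithinAt ℝ 1 (fun p => infDist p (frontier Ω)) (closure Ω) y) {u : E → ℝ}
    (hu : DifferentiableWithinAt ℝ u (closure Ω) y) (huy : u y = 0) {β : ℝ} (hβ : 0 ≤ β)
    (hu0 : ∀ᶠ x in 𝓝[closure Ω] y, 0 ≤ u x)
    (hub : ∀ᶠ x in 𝓝[closure Ω] y, u x ≤ β * infDist x (frontier Ω)) :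
    ‖fderivWithin ℝ u (closure Ω) y‖ ≤ β := by
  have hyc := frontier_subset_closure hy
  have hnotin : ∀ x ∈ Ω, x ∉ frontier Ω := fun x hx h => (hΩ.frontier_eq ▸ h).2 hx
  obtain ⟨M, hM, hlim, hdiff⟩ := hd.exists_tendsto_fderiv hΩ hyc
  have hnorm : ‖M‖ = 1 := by
    have : (𝓝[Ω] y).NeBot := mem_closure_iff_nhdsWithin_neBot.1 hyc
    refine tendsto_nhds_unique hlim.norm (tendsto_const_nhds.congr' ?_)
    filter_upwards [hdiff, self_mem_nhdsWithin] with x hx hxΩ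
    exact (norm_eq_one_of_hasFDerivAt_infDist isClosed_frontier ⟨y, hy⟩ (hnotin x hxΩ)
      hx.hasFDerivAt).symm
  refine norm_le_of_nonneg_of_le_on_halfSpace hβ hnorm fun v hv => ?_
  have hcone : v ∈ posTangentConeAt (closure Ω) y := by
    refine mem_posTangentConeAt_closure_of_fderiv_pos hΩ (continuous_infDist_pt (frontier Ω))
      (fun x hx => ?_) (fun x hx => infDist_zero_of_mem hx) hy ?_
    · exact (isClosed_frontier.notMem_iff_infDist_pos ⟨y, hy⟩).1 (hnotin x hx)
    · exact ((ContinuousLinearMap.apply ℝ ℝ v).continuous.tendsto M |>.comp hlim).eventually_const_lt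
        hv
  have hdy : infDist y (frontier Ω) = 0 := infDist_zero_of_mem hy
  constructor
  · refine IsLocalMinOn.hasFDerivWithinAt_nonneg ?_ hu.hasFDerivWithinAt hcone
    simpa [IsLocalMinOn, IsMinFilter, huy] using hu0
  · have := IsLocalMinOn.hasFDerivWithinAt_nonneg (f := fun x => β * infDist x (frontier Ω) - u x)
      ?_ ((hM.const_mul β).fun_sub hu.hasFDerivWithinAt) hcone
    · simpa using this
    · simpa [IsLocalMinOn, IsMinFilter, huy, hdy] using hub

/-- **Boundary gradient estimate** (Lemma 3.3, flat ambient space): if the distance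
function `d(p) = dist(p, ∂Ω)` is smooth on the collar `Ω_{δ₁}` up to `∂Ω` and its level
sets have mean curvature at least `δ₀/2` there (encoded as `−Δd ≥ δ₀/2`), then for
`ε ∈ (0, ε₀)` with `ε₀ = min(C₂, 1)`, `C₂ = max(2^{(3k−1)/2} δ₀^{−k}, δ₁^{−1} C₁)`,
any solution `u` of `(★★)_ε` with `0 ≤ u ≤ C₁` satisfies `sup_{∂Ω} |∇u| ≤ C₂`. -/
theorem boundary_gradient_estimate (n : ℕ) (hn : 1 ≤ n) (k : ℝ) (hk : 1 ≤ k)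
    (Ω : Set (EuclideanSpace ℝ (Fin (n + 1)))) (hΩo : IsOpen Ω)
    (hΩb : Bornology.IsBounded Ω)
    (δ₀ δ₁ : ℝ) (hδ₀ : 0 < δ₀) (hδ₁ : 0 < δ₁)
    (hd_smooth : ContDiffOn ℝ (⊤ : ℕ∞) (fun p => Metric.infDist p (frontier Ω))
      {p ∈ closure Ω | Metric.infDist p (frontier Ω) < δ₁})
    (hd_mean : ∀ p ∈ Ω, Metric.infDist p (frontier Ω) < δ₁ →
      δ₀ / 2 ≤ -vdiv (gradient (fun q => Metric.infDist q (frontier Ω))) p)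
    (C₁ : ℝ) (hC₁ : 0 < C₁)
    (ε : ℝ)
    (hε : 0 < ε)
    (hεε₀ : ε < min (max ((2 : ℝ) ^ ((3 * k - 1) / 2) * δ₀ ^ (-k)) (δ₁⁻¹ * C₁)) 1)
    (u : EuclideanSpace ℝ (Fin (n + 1)) → ℝ)
    (hu : IsRegularizedSolution n k ε Ω u)
    (hu_bd : ∀ x ∈ Ω, 0 ≤ u x ∧ u x ≤ C₁) :
    ∀ y ∈ frontier Ω, ‖gradC Ω u y‖ ≤
      max ((2 : ℝ) ^ ((3 * k - 1) / 2) * δ₀ ^ (-k)) (δ₁⁻¹ * C₁) := by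
  intro y hy
  have hyc := frontier_subset_closure hy
  have hdy : infDist y (frontier Ω) = 0 := infDist_zero_of_mem hy
  have hdc : Continuous fun z => infDist z (frontier Ω) := continuous_infDist_pt _
  have hnear : ∀ δ > 0, ∀ᶠ x in 𝓝[closure Ω] y, x ∈ closure Ω ∧ infDist x (frontier Ω) < δ :=
    fun δ hδ => eventually_mem_nhdsWithin.and <| nhdsWithin_le_nhds <|
      hdc.continuousAt.eventually_lt continuousAt_const (hdy ▸ hδ)
  have hd1 : ContDiffWithinAt ℝ 1 (fun p => infDist p (frontier Ω)) (closure Ω) y :=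
    ((hd_smooth y ⟨hyc, hdy ▸ hδ₁⟩).mono_of_mem_nhdsWithin (hnear δ₁ hδ₁)).of_le (by simp)
  refine le_of_forall_gt_imp_ge_of_dense fun β hβ => ?_
  obtain ⟨hβ₀, hβ₁⟩ := max_lt_iff.1 hβ
  have hεβ : ε < β := (lt_min_iff.1 hεε₀).1.trans hβ
  obtain ⟨δ, hδ, hle⟩ := hu.le_barrier hk hΩo hΩb hδ₀ hδ₁ hC₁ ⟨y, hy⟩ hd_smooth hd_mean
    (fun x hx => (hu_bd x hx).2) hε hεβ hβ₀ hβ₁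
  rw [gradC, LinearIsometryEquiv.norm_map]
  refine norm_fderivWithin_closure_le_of_le_infDist hΩo hy hd1
    (hu.1.differentiableOn (by simp) y hyc) (hu.2.2 y hy) (hε.trans hεβ).le ?_
    ((hnear δ hδ).mono fun x hx => hle x hx.1 hx.2.le)
  filter_upwards [self_mem_nhdsWithin] with x hx
  by_cases hxΩ : x ∈ Ω
  · exact (hu_bd x hxΩ).1
  · exact (hu.2.2 x (hΩo.frontier_eq ▸ ⟨hx, hxΩ⟩)).ge
end

section
/- Let n ≥ 1, k ≥ 1, ε > 0, κ ∈ [0,1], and let Ω ⊂ ℝ^{n+1} be a bounded open set. Let u be smooth on the closure of Ω with u = 0 on ∂Ω and satisfy div(∇u/√(ε² + |∇u|²)) = −κ (ε² + |∇u|²)^{−1/(2k)} at every point of Ω. Then sup_Ω |∇u| ≤ sup_{∂Ω} √(ε² + |∇u|²), where on the right-hand side ∇u denotes the continuous extension of the gradient of u to ∂Ω. -/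
open MeasureTheory Metric Set

open Filter Topology RealInnerProductSpace

section GradientEstimate

variable {E : Type*} [NormedAddCommGroup E] [InnerProductSpace ℝ E]

/-- A linear operator with nonpositive quadratic form satisfies `tr B ≤ ⟪p, B p⟫ / S`
whenever `‖p‖ ^ 2 ≤ S`. -/
lemma trace_le_inner_div_of_nonpos [FiniteDimensional ℝ E] (B : E →ₗ[ℝ] E)
    (hB : ∀ w, ⟪w, B w⟫ ≤ 0)
    {p : E} {S : ℝ} (hS : 0 < S) (hp : ‖p‖ ^ 2 ≤ S) :
    LinearMap.trace ℝ E B ≤ ⟪p, B p⟫ / S := by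
  rcases eq_or_ne p 0 with rfl | hp0
  · rw [LinearMap.trace_eq_sum_inner B (stdOrthonormalBasis ℝ E)]
    simpa using Finset.sum_nonpos fun i _ => hB (stdOrthonormalBasis ℝ E i)
  have hpn : 0 < ‖p‖ := norm_pos_iff.2 hp0
  set q : E := ‖p‖⁻¹ • p with hq
  have hqn : ‖q‖ = 1 := by simp [hq, norm_smul, hpn.ne']
  have hpq : p = ‖p‖ • q := by simp [hq, smul_smul, hpn.ne']
  have ho : Orthonormal ℝ ((↑) : ({q} : Set E) → E) := by
    classical
    rw [orthonormal_subtype_iff_ite]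
    simp [hqn]
  obtain ⟨s, b, hs, hb⟩ := ho.exists_orthonormalBasis_extension
  have hqs : q ∈ s := hs rfl
  have h1 : LinearMap.trace ℝ E B ≤ ⟪q, B q⟫ := by
    rw [LinearMap.trace_eq_sum_inner B b]
    have h := Finset.single_le_sum (f := fun i => -⟪b i, B (b i)⟫)
      (fun i _ => neg_nonneg.2 (hB (b i))) (Finset.mem_univ (⟨q, hqs⟩ : s))
    simpa [hb, Finset.sum_neg_distrib] using h
  have h2 : ⟪p, B p⟫ = ‖p‖ ^ 2 * ⟪q, B q⟫ := by
    conv_lhs => rw [hpq]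
    rw [map_smul, real_inner_smul_left, real_inner_smul_right]
    ring
  refine h1.trans ?_
  rw [le_div_iff₀ hS, h2]
  nlinarith [hB q]

/-- The second derivative is nonpositive at a local maximum. -/
lemma IsLocalMax.hasDerivAt_hasDerivAt_nonpos {f f' : ℝ → ℝ} {a c : ℝ} (h : IsLocalMax f a)
    (hf : ∀ᶠ t in 𝓝 a, HasDerivAt f (f' t) t) (hf' : HasDerivAt f' c a) : c ≤ 0 := by
  by_contra! hc
  have hd : deriv f =ᶠ[𝓝 a] f' := hf.mono fun t ht => ht.deriv
  have hdd : deriv (deriv f) a = c := by rw [hd.deriv_eq, hf'.deriv]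
  have hmin : IsLocalMin f a :=
    isLocalMin_of_deriv_deriv_pos (hdd ▸ hc) h.deriv_eq_zero hf.self_of_nhds.continuousAt
  have hconst : f =ᶠ[𝓝 a] fun _ => f a := by
    filter_upwards [h, hmin] with t h1 h2 using le_antisymm h1 h2
  have := hconst.deriv.deriv_eq
  simp [hdd] at this
  exact hc.ne' this

/-- Divergence of the normalized field `g / √(ε² + |g|²)`. -/
lemma trace_fderiv_normalized [FiniteDimensional ℝ E] {g : E → E} {x : E} {ε : ℝ} (hε : 0 < ε)
    (hg : DifferentiableAt ℝ g x) :
    LinearMap.trace ℝ E (fderiv ℝ (fun y => (√(ε ^ 2 + ‖g y‖ ^ 2))⁻¹ • g y) x : E →ₗ[ℝ] E)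
      = (√(ε ^ 2 + ‖g x‖ ^ 2))⁻¹ * (LinearMap.trace ℝ E (fderiv ℝ g x : E →ₗ[ℝ] E)
        - ⟪g x, fderiv ℝ g x (g x)⟫ / (ε ^ 2 + ‖g x‖ ^ 2)) := by
  have hS : 0 < ε ^ 2 + ‖g x‖ ^ 2 := by positivity
  have hW : 0 < √(ε ^ 2 + ‖g x‖ ^ 2) := Real.sqrt_pos.2 hS
  have h1 := ((hasDerivAt_inv hW.ne').comp_hasFDerivAt x
    ((hg.hasFDerivAt.norm_sq.const_add (ε ^ 2)).sqrt hS.ne')).smul hg.hasFDerivAt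
  have h2 : fderiv ℝ (fun y => (√(ε ^ 2 + ‖g y‖ ^ 2))⁻¹ • g y) x = _ := h1.fderiv
  have h3 : √(ε ^ 2 + ‖g x‖ ^ 2) ^ 2 = ε ^ 2 + ‖g x‖ ^ 2 := Real.sq_sqrt hS.le
  rw [h2]
  simp only [ContinuousLinearMap.toLinearMap_add, ContinuousLinearMap.toLinearMap_smul, map_add,
    map_smul,ContinuousLinearMap.coe_smulRight, LinearMap.trace_smulRight]
  rw [← h3]
  simp
  field_simp
  ring

lemma HasFDerivAt.hasDerivAt_add_smul {F : Type*} [NormedAddCommGroup F] [NormedSpace ℝ F]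
    {f : E → F} {f' : E →L[ℝ] F} {x w : E} {t : ℝ} (hf : HasFDerivAt f f' (x + t • w)) :
    HasDerivAt (fun s : ℝ => f (x + s • w)) (f' w) t := by
  have hline : HasDerivAt (fun s : ℝ => x + s • w) w t := by
    simpa using ((hasDerivAt_id t).smul_const w).const_add x
  exact hf.comp_hasDerivAt t hline

/-- The equation `tr Dg = ⟪g, Dg g⟫ / S - κ S ^ c`, `S = ε ^ 2 + ‖g‖ ^ 2`, differentiated in the
direction `e`. -/
lemma trace_fderiv_fderiv_apply [FiniteDimensional ℝ E] {g : E → E} {x : E} {ε κ c : ℝ}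
    (hε : 0 < ε) (hg : ContDiffAt ℝ 2 g x)
    (hpde : ∀ᶠ z in 𝓝 x, LinearMap.trace ℝ E (fderiv ℝ g z : E →ₗ[ℝ] E)
      = ⟪g z, fderiv ℝ g z (g z)⟫ / (ε ^ 2 + ‖g z‖ ^ 2) - κ * (ε ^ 2 + ‖g z‖ ^ 2) ^ c) (e : E) :
    LinearMap.trace ℝ E (fderiv ℝ (fderiv ℝ g) x e : E →ₗ[ℝ] E)
      = ⟪g x, fderiv ℝ (fderiv ℝ g) x e (g x)⟫ / (ε ^ 2 + ‖g x‖ ^ 2)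
        + (⟪fderiv ℝ g x e, fderiv ℝ g x (g x)⟫ + ⟪g x, fderiv ℝ g x (fderiv ℝ g x e)⟫)
          / (ε ^ 2 + ‖g x‖ ^ 2)
        - 2 * ⟪g x, fderiv ℝ g x (g x)⟫ * ⟪g x, fderiv ℝ g x e⟫ / (ε ^ 2 + ‖g x‖ ^ 2) ^ 2
        - 2 * κ * c * (ε ^ 2 + ‖g x‖ ^ 2) ^ (c - 1) * ⟪g x, fderiv ℝ g x e⟫ := by
  have hS : 0 < ε ^ 2 + ‖g x‖ ^ 2 := by positivity
  have hline : Tendsto (fun t : ℝ => x + t • e) (𝓝 0) (𝓝 x) :=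
    Continuous.tendsto' (by fun_prop) _ _ (by simp)
  have hx0 : x + (0 : ℝ) • e = x := by simp
  have hG : HasDerivAt (fun t : ℝ => g (x + t • e)) (fderiv ℝ g x e) 0 :=
    HasFDerivAt.hasDerivAt_add_smul
      (by rw [hx0]; exact (hg.differentiableAt (by norm_num)).hasFDerivAt)
  have hP : HasDerivAt (fun t : ℝ => fderiv ℝ g (x + t • e)) (fderiv ℝ (fderiv ℝ g) x e) 0 :=
    HasFDerivAt.hasDerivAt_add_smul (by
      rw [hx0]
      exact ((hg.fderiv_right (m := 1) (by norm_num)).differentiableAt (by norm_num)).hasFDerivAt)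
  have hT : HasDerivAt (fun t : ℝ => LinearMap.trace ℝ E (fderiv ℝ g (x + t • e) : E →ₗ[ℝ] E))
      (LinearMap.trace ℝ E (fderiv ℝ (fderiv ℝ g) x e : E →ₗ[ℝ] E)) 0 :=
    (LinearMap.toContinuousLinearMap
      (LinearMap.trace ℝ E ∘ₗ ContinuousLinearMap.coeLM ℝ)).hasFDerivAt.comp_hasDerivAt 0 hP
  have hSd := hG.norm_sq.const_add (ε ^ 2)
  have hR := ((hG.inner ℝ (hP.clm_apply hG)).div hSd (by simpa using hS.ne')).sub
    ((hSd.rpow_const (p := c) (Or.inl (by simpa using hS.ne'))).const_mul κ)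
  have hev : ∀ᶠ t : ℝ in 𝓝 0, _ := hline.eventually hpde
  have := hT.unique (hR.congr_of_eventuallyEq hev)
  rw [this]
  simp only [zero_smul, add_zero, inner_add_right]
  field_simp
  ring

/-- At a local maximum of `⟪e, g⟫ + δ exp (λ ⟪e, ·⟫)`, the derivative of `g` in the direction `e`
is explicit, and the second derivative is bounded above. -/
lemma fderiv_of_isLocalMax_inner_add_exp {g : E → E} {x e : E} {δ l : ℝ}
    (hg : ContDiffAt ℝ 2 g x)
    (hsymm : ∀ᶠ z in 𝓝 x, ∀ v w, ⟪fderiv ℝ g z v, w⟫ = ⟪v, fderiv ℝ g z w⟫)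
    (hmax : IsLocalMax (fun z => ⟪e, g z⟫ + δ * Real.exp (l * ⟪e, z⟫)) x) :
    fderiv ℝ g x e = -(δ * l * Real.exp (l * ⟪e, x⟫)) • e ∧
      ∀ w, ⟪w, fderiv ℝ (fderiv ℝ g) x e w⟫
        + δ * l ^ 2 * Real.exp (l * ⟪e, x⟫) * ⟪e, w⟫ ^ 2 ≤ 0 := by
  have hdg : ∀ᶠ z in 𝓝 x, HasFDerivAt g (fderiv ℝ g z) z :=
    (hg.eventually (by simp)).mono fun z hz => (hz.differentiableAt (by norm_num)).hasFDerivAt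
  have hddg : HasFDerivAt (fderiv ℝ g) (fderiv ℝ (fderiv ℝ g) x) x :=
    ((hg.fderiv_right (m := 1) (by norm_num)).differentiableAt (by norm_num)).hasFDerivAt
  have hline (w : E) : Tendsto (fun t : ℝ => x + t • w) (𝓝 0) (𝓝 x) :=
    Continuous.tendsto' (by fun_prop) _ _ (by simp)
  have hx0 (w : E) : x + (0 : ℝ) • w = x := by simp
  have hloc (w : E) : IsLocalMax
      (fun t : ℝ => ⟪e, g (x + t • w)⟫ + δ * Real.exp (l * ⟪e, x + t • w⟫)) 0 := by
    have := (hline w).eventually hmax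
    simpa [IsLocalMax, IsMaxFilter] using this
  have hexp (w : E) (t : ℝ) : HasDerivAt (fun t : ℝ => Real.exp (l * ⟪e, x + t • w⟫))
      (Real.exp (l * ⟪e, x + t • w⟫) * (l * ⟪e, w⟫)) t := by
    have h : HasFDerivAt (fun z : E => ⟪e, z⟫) (innerSL ℝ e) (x + t • w) :=
      (innerSL ℝ e).hasFDerivAt
    exact (h.hasDerivAt_add_smul.const_mul l).exp
  have hfst (w : E) : ∀ᶠ t : ℝ in 𝓝 0,
      HasDerivAt (fun t : ℝ => ⟪e, g (x + t • w)⟫ + δ * Real.exp (l * ⟪e, x + t • w⟫))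
        (⟪e, fderiv ℝ g (x + t • w) w⟫ + δ * (Real.exp (l * ⟪e, x + t • w⟫) * (l * ⟪e, w⟫))) t := by
    filter_upwards [(hline w).eventually hdg] with t ht
    exact ((innerSL ℝ e).hasFDerivAt.comp_hasDerivAt t ht.hasDerivAt_add_smul).add
      ((hexp w t).const_mul δ)
  have hsnd (w : E) : HasDerivAt (fun t : ℝ => ⟪e, fderiv ℝ g (x + t • w) w⟫ +
        δ * (Real.exp (l * ⟪e, x + t • w⟫) * (l * ⟪e, w⟫)))
      (⟪e, fderiv ℝ (fderiv ℝ g) x w w⟫ +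
        δ * (Real.exp (l * ⟪e, x⟫) * (l * ⟪e, w⟫) * (l * ⟪e, w⟫))) 0 := by
    have h1 : HasDerivAt (fun t : ℝ => fderiv ℝ g (x + t • w)) (fderiv ℝ (fderiv ℝ g) x w) 0 :=
      HasFDerivAt.hasDerivAt_add_smul (by rwa [hx0])
    have h2 := hexp w 0
    rw [hx0] at h2
    have h3 : HasDerivAt (fun t : ℝ => fderiv ℝ g (x + t • w) w)
        (fderiv ℝ (fderiv ℝ g) x w w) 0 := by
      simpa using h1.clm_apply (hasDerivAt_const (0 : ℝ) w)
    exact ((innerSL ℝ e).hasFDerivAt.comp_hasDerivAt 0 h3).add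
      ((h2.mul_const (l * ⟪e, w⟫)).const_mul δ)
  refine ⟨ext_inner_right ℝ fun w => ?_, fun w => ?_⟩
  · have := (hloc w).hasDerivAt_eq_zero (hfst w).self_of_nhds
    rw [hx0] at this
    rw [hsymm.self_of_nhds, real_inner_smul_left]
    linarith
  · have h := (hloc w).hasDerivAt_hasDerivAt_nonpos (hfst w) (hsnd w)
    have h4 : fderiv ℝ (fderiv ℝ g) x e w = fderiv ℝ (fderiv ℝ g) x w e :=
      (hg.isSymmSndFDerivAt (by simp)).eq e w
    have h5 : ⟪w, fderiv ℝ (fderiv ℝ g) x w e⟫ = ⟪e, fderiv ℝ (fderiv ℝ g) x w w⟫ := by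
      have h1 : HasDerivAt (fun t : ℝ => fderiv ℝ g (x + t • w)) (fderiv ℝ (fderiv ℝ g) x w) 0 :=
        HasFDerivAt.hasDerivAt_add_smul (by rwa [hx0])
      have key (a b : E) : HasDerivAt (fun t : ℝ => ⟪a, fderiv ℝ g (x + t • w) b⟫)
          ⟪a, fderiv ℝ (fderiv ℝ g) x w b⟫ 0 := by
        have h3 : HasDerivAt (fun t : ℝ => fderiv ℝ g (x + t • w) b)
            (fderiv ℝ (fderiv ℝ g) x w b) 0 := by
          simpa using h1.clm_apply (hasDerivAt_const (0 : ℝ) b)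
        exact (innerSL ℝ a).hasFDerivAt.comp_hasDerivAt 0 h3
      refine (key w e).unique ((key e w).congr_of_eventuallyEq ?_)
      filter_upwards [(hline w).eventually hsymm] with t ht
      rw [← ht, real_inner_comm]
    rw [h4, h5]
    linarith

/-- The coefficient of the first order term, in the direction `e`, of the linearization of
`tr Dg = ⟪g, Dg g⟫ / S - κ S ^ c`. -/
noncomputable def linearizedDrift (g : E → E) (ε κ c : ℝ) (e x : E) : ℝ :=
  (⟪e, fderiv ℝ g x (g x)⟫ + ⟪g x, fderiv ℝ g x e⟫) / (ε ^ 2 + ‖g x‖ ^ 2)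
    - 2 * ⟪g x, fderiv ℝ g x (g x)⟫ * ⟪g x, e⟫ / (ε ^ 2 + ‖g x‖ ^ 2) ^ 2
    - 2 * κ * c * (ε ^ 2 + ‖g x‖ ^ 2) ^ (c - 1) * ⟪g x, e⟫

lemma continuousOn_linearizedDrift {g : E → E} {ε κ c : ℝ} (hε : 0 < ε) (e : E) {s : Set E}
    (hs : IsOpen s) (hg : ContDiffOn ℝ 2 g s) : ContinuousOn (linearizedDrift g ε κ c e) s := by
  have h1 := hg.continuousOn
  have h2 := hg.continuousOn_fderiv_of_isOpen hs (by norm_num)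
  have hS (x : E) : ε ^ 2 + ‖g x‖ ^ 2 ≠ 0 := by positivity
  have hS2 (x : E) : (ε ^ 2 + ‖g x‖ ^ 2) ^ 2 ≠ 0 := by positivity
  have h3 : ContinuousOn (fun x => ε ^ 2 + ‖g x‖ ^ 2) s := by fun_prop
  have h4 := h3.rpow_const (p := c - 1) fun x _ => Or.inl (hS x)
  unfold linearizedDrift
  fun_prop (disch := simp [hS, hS2])

/-- For large `λ`, the function `⟪e, g⟫ + δ exp (λ ⟪e, ·⟫)` has no local maximum. -/
lemma not_isLocalMax_inner_add_exp [FiniteDimensional ℝ E] {g : E → E} {x e : E} {ε κ c δ l : ℝ}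
    (hε : 0 < ε) (hδ : 0 < δ) (hl : 0 < l) (he : ‖e‖ = 1) (hg : ContDiffAt ℝ 2 g x)
    (hsymm : ∀ᶠ z in 𝓝 x, ∀ v w, ⟪fderiv ℝ g z v, w⟫ = ⟪v, fderiv ℝ g z w⟫)
    (hpde : ∀ᶠ z in 𝓝 x, LinearMap.trace ℝ E (fderiv ℝ g z : E →ₗ[ℝ] E)
      = ⟪g z, fderiv ℝ g z (g z)⟫ / (ε ^ 2 + ‖g z‖ ^ 2) - κ * (ε ^ 2 + ‖g z‖ ^ 2) ^ c)
    (hdrift : linearizedDrift g ε κ c e x * (ε ^ 2 + ‖g x‖ ^ 2) < l * ε ^ 2) :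
    ¬ IsLocalMax (fun z => ⟪e, g z⟫ + δ * Real.exp (l * ⟪e, z⟫)) x := by
  intro hmax
  obtain ⟨h1, h2⟩ := fderiv_of_isLocalMax_inner_add_exp hg hsymm hmax
  have h3 := trace_fderiv_fderiv_apply hε hg hpde e
  have hS : 0 < ε ^ 2 + ‖g x‖ ^ 2 := by positivity
  set φ := Real.exp (l * ⟪e, x⟫)
  have hφ0 : 0 < φ := Real.exp_pos _
  set K : E →L[ℝ] E := fderiv ℝ (fderiv ℝ g) x e
  set B : E →ₗ[ℝ] E := (K : E →ₗ[ℝ] E) +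
    (δ * l ^ 2 * φ) • (innerSL ℝ e : E →ₗ[ℝ] ℝ).smulRight e with hB
  have hBw (w : E) : ⟪w, B w⟫ = ⟪w, K w⟫ + δ * l ^ 2 * φ * ⟪e, w⟫ ^ 2 := by
    have : B w = K w + (δ * l ^ 2 * φ * ⟪e, w⟫) • e := by simp [hB, smul_smul]
    rw [this, inner_add_right, real_inner_smul_right, real_inner_comm e w]
    ring
  have h4 := trace_le_inner_div_of_nonpos B (fun w => (hBw w).trans_le (h2 w)) hS
    (by nlinarith : ‖g x‖ ^ 2 ≤ ε ^ 2 + ‖g x‖ ^ 2)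
  have h5 : LinearMap.trace ℝ E B = LinearMap.trace ℝ E (K : E →ₗ[ℝ] E) + δ * l ^ 2 * φ := by
    simp [hB, he]
  have h6 : ⟪e, g x⟫ ^ 2 ≤ ‖g x‖ ^ 2 := by
    have := abs_real_inner_le_norm e (g x)
    rw [he, one_mul] at this
    exact sq_le_sq' (by linarith [neg_abs_le ⟪e, g x⟫]) ((le_abs_self _).trans this)
  have h7 : LinearMap.trace ℝ E (K : E →ₗ[ℝ] E) = ⟪g x, K (g x)⟫ / (ε ^ 2 + ‖g x‖ ^ 2)
      - δ * l * φ * linearizedDrift g ε κ c e x := by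
    have h8 : ⟪g x, fderiv ℝ g x e⟫ = -(δ * l * φ) * ⟪g x, e⟫ := by
      rw [h1, real_inner_smul_right]
    have h9 : ⟪fderiv ℝ g x e, fderiv ℝ g x (g x)⟫ = -(δ * l * φ) * ⟪e, fderiv ℝ g x (g x)⟫ := by
      rw [h1, real_inner_smul_left]
    have h10 : ⟪g x, fderiv ℝ g x (fderiv ℝ g x e)⟫ = -(δ * l * φ) * ⟪g x, fderiv ℝ g x e⟫ := by
      conv_lhs => rw [h1, map_smul, real_inner_smul_right]
    rw [h3, h9, h10, linearizedDrift]
    linear_combination (-2 * ⟪g x, fderiv ℝ g x (g x)⟫ / (ε ^ 2 + ‖g x‖ ^ 2) ^ 2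
      - 2 * κ * c * (ε ^ 2 + ‖g x‖ ^ 2) ^ (c - 1)) * h8
  rw [h5, h7, hBw, add_div] at h4
  have h11 : δ * l * φ * (l - linearizedDrift g ε κ c e x)
      ≤ δ * l * φ * (l * ⟪e, g x⟫ ^ 2 / (ε ^ 2 + ‖g x‖ ^ 2)) := by
    have : δ * l ^ 2 * φ * ⟪e, g x⟫ ^ 2 / (ε ^ 2 + ‖g x‖ ^ 2)
      = δ * l * φ * (l * ⟪e, g x⟫ ^ 2 / (ε ^ 2 + ‖g x‖ ^ 2)) := by ring
    linarith
  have h12 := le_of_mul_le_mul_left h11 (by positivity)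
  rw [le_div_iff₀ hS] at h12
  nlinarith

/-- Weak maximum principle for the components of a field with symmetric derivative solving
`tr Dg = ⟪g, Dg g⟫ / S - κ S ^ c`, `S = ε ^ 2 + ‖g‖ ^ 2`. -/
theorem inner_le_of_forall_frontier_inner_le_s6 [FiniteDimensional ℝ E] {Ω : Set E} {g : E → E}
    {e : E} {ε κ c M : ℝ} (hΩo : IsOpen Ω) (hΩb : Bornology.IsBounded Ω) (hε : 0 < ε)
    (he : ‖e‖ = 1) (hg : ContDiffOn ℝ 2 g Ω) (hgc : ContinuousOn g (closure Ω))
    (hsymm : ∀ z ∈ Ω, ∀ v w, ⟪fderiv ℝ g z v, w⟫ = ⟪v, fderiv ℝ g z w⟫)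
    (hpde : ∀ z ∈ Ω, LinearMap.trace ℝ E (fderiv ℝ g z : E →ₗ[ℝ] E)
      = ⟪g z, fderiv ℝ g z (g z)⟫ / (ε ^ 2 + ‖g z‖ ^ 2) - κ * (ε ^ 2 + ‖g z‖ ^ 2) ^ c)
    (hM : ∀ z ∈ frontier Ω, ⟪e, g z⟫ ≤ M) {x : E} (hx : x ∈ Ω) : ⟪e, g x⟫ ≤ M := by
  by_contra! hlt
  obtain ⟨m, hMm, hmx⟩ := exists_between hlt
  have hcomp : IsCompact (closure Ω) := hΩb.isCompact_closure
  have hvc : ContinuousOn (fun z => ⟪e, g z⟫) (closure Ω) := by fun_prop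
  have hKΩ : closure Ω ∩ (fun z => ⟪e, g z⟫) ⁻¹' Ici m ⊆ Ω := by
    rintro z ⟨hz, hzm⟩
    by_contra hzΩ
    have hzf : z ∈ frontier Ω := by rw [hΩo.frontier_eq]; exact ⟨hz, hzΩ⟩
    exact absurd (hM z hzf) (not_le.2 (hMm.trans_le hzm))
  have hK : IsCompact (closure Ω ∩ (fun z => ⟪e, g z⟫) ⁻¹' Ici m) :=
    hcomp.of_isClosed_subset (hvc.preimage_isClosed_of_isClosed isClosed_closure isClosed_Ici)
      inter_subset_left
  have hdc : ContinuousOn (fun z => linearizedDrift g ε κ c e z * (ε ^ 2 + ‖g z‖ ^ 2) / ε ^ 2)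
      (closure Ω ∩ (fun z => ⟪e, g z⟫) ⁻¹' Ici m) := by
    have h1 := (continuousOn_linearizedDrift (κ := κ) (c := c) hε e hΩo hg).mono hKΩ
    have h2 := hg.continuousOn.mono hKΩ
    fun_prop
  obtain ⟨b, hb⟩ := hK.bddAbove_image hdc
  set l := max b 0 + 1 with hl
  have hl0 : 0 < l := by positivity
  obtain ⟨C, hC⟩ := hcomp.bddAbove_image
    (f := fun z => Real.exp (l * ⟪e, z⟫)) (by fun_prop)
  have hC' (z : E) (hz : z ∈ closure Ω) : Real.exp (l * ⟪e, z⟫) ≤ C := hC (mem_image_of_mem _ hz)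
  have hC0 : 0 < C := (Real.exp_pos _).trans_le (hC' x (subset_closure hx))
  set δ := (⟪e, g x⟫ - m) / C
  have hδ0 : 0 < δ := div_pos (sub_pos.2 hmx) hC0
  have hδC : δ * C = ⟪e, g x⟫ - m := div_mul_cancel₀ _ hC0.ne'
  obtain ⟨y, hy, hymax⟩ := hcomp.exists_isMaxOn ⟨x, subset_closure hx⟩
    (f := fun z => ⟪e, g z⟫ + δ * Real.exp (l * ⟪e, z⟫)) (by fun_prop)
  have hxy : ⟪e, g x⟫ + δ * Real.exp (l * ⟪e, x⟫) ≤ ⟪e, g y⟫ + δ * Real.exp (l * ⟪e, y⟫) :=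
    hymax (subset_closure hx)
  have hyK : y ∈ closure Ω ∩ (fun z => ⟪e, g z⟫) ⁻¹' Ici m := by
    refine ⟨hy, ?_⟩
    have h1 := mul_le_mul_of_nonneg_left (hC' y hy) hδ0.le
    have h2 := mul_pos hδ0 (Real.exp_pos (l * ⟪e, x⟫))
    simp only [mem_preimage, mem_Ici]
    linarith
  have hyΩ : Ω ∈ 𝓝 y := hΩo.mem_nhds (hKΩ hyK)
  refine not_isLocalMax_inner_add_exp hε hδ0 hl0 he (hg.contDiffAt hyΩ)
    (eventually_of_mem hyΩ hsymm) (eventually_of_mem hyΩ hpde) ?_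
    (hymax.isLocalMax (mem_of_superset hyΩ subset_closure))
  rw [← div_lt_iff₀ (by positivity)]
  have h1 : _ ≤ b := hb (mem_image_of_mem _ hyK)
  exact h1.trans_lt (by rw [hl]; linarith [le_max_left b 0])

/-- A vector orthogonal to the tangent cone of `s` at `x` is asymptotically orthogonal to `y - x`
for `y ∈ s` close to `x`. -/
lemma isLittleO_inner_sub_of_forall_tangentConeAt [FiniteDimensional ℝ E] {s : Set E} {x w : E}
    (hw : ∀ v ∈ tangentConeAt ℝ s x, ⟪w, v⟫ = 0) :
    (fun y => ⟪w, y - x⟫) =o[𝓝[s] x] fun y => y - x := by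
  rw [Asymptotics.isLittleO_iff]
  intro η hη
  by_contra hbad
  obtain ⟨U, hU⟩ := exists_ultrafilter_iff.2 (frequently_iff_neBot.1 (not_eventually.1 hbad))
  have hUx : (U : Filter E) ≤ 𝓝[s] x := hU.trans inf_le_left
  have hUb : ∀ᶠ y in (U : Filter E), ¬ ‖⟪w, y - x⟫‖ ≤ η * ‖y - x‖ :=
    le_principal_iff.1 (hU.trans inf_le_right)
  have hball : ∀ᶠ y in (U : Filter E), ‖y - x‖⁻¹ • (y - x) ∈ closedBall (0 : E) 1 :=
    Eventually.of_forall fun y => by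
      simpa [norm_smul] using inv_mul_le_one (a := ‖y - x‖)
  obtain ⟨v, -, hv⟩ := (isCompact_closedBall (0 : E) 1).ultrafilter_le_nhds
    (U.map fun y => ‖y - x‖⁻¹ • (y - x)) (le_principal_iff.2 hball)
  have hv' : Tendsto (fun y => ‖y - x‖⁻¹ • (y - x)) (U : Filter E) (𝓝 v) := hv
  have hvt : v ∈ tangentConeAt ℝ s x := by
    refine mem_tangentConeAt_of_seq (U : Filter E) (fun y => ‖y - x‖⁻¹) (fun y => y - x) ?_ ?_ hv'
    · exact tendsto_sub_nhds_zero_iff.2 (hUx.trans nhdsWithin_le_nhds)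
    · filter_upwards [hUx self_mem_nhdsWithin] with y hy
      simpa using hy
  have hlim : Tendsto (fun y => ‖⟪w, ‖y - x‖⁻¹ • (y - x)⟫‖) (U : Filter E) (𝓝 ‖⟪w, v⟫‖) :=
    (tendsto_const_nhds.inner hv').norm
  have hge : η ≤ ‖⟪w, v⟫‖ := by
    refine ge_of_tendsto hlim ?_
    filter_upwards [hUb] with y hy
    have hy0 : 0 < ‖y - x‖ := by
      rcases (norm_nonneg (y - x)).eq_or_lt with h | h
      · exact absurd (by simp [norm_eq_zero.1 h.symm]) hy
      · exact h
    rw [real_inner_smul_right, norm_mul, norm_inv, norm_norm, inv_mul_eq_div, le_div_iff₀ hy0]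
    exact (not_le.1 hy).le
  rw [hw v hvt, norm_zero] at hge
  exact hge.not_gt hη

/-- At a boundary point where the closure of `Ω` is not a set of unique differentiability, a
function vanishing on the boundary and differentiable within the closure has zero as a
derivative. -/
lemma hasFDerivWithinAt_zero_of_not_uniqueDiffWithinAt [FiniteDimensional ℝ E] {Ω : Set E}
    {u : E → ℝ} {u' : E →L[ℝ] ℝ} {x : E} (hΩ : IsOpen Ω) (hx : x ∈ frontier Ω)
    (hbd : ∀ z ∈ frontier Ω, u z = 0)
    (hnu : ¬ UniqueDiffWithinAt ℝ (closure Ω) x) (hu : HasFDerivWithinAt u u' (closure Ω) x) :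
    HasFDerivWithinAt u (0 : E →L[ℝ] ℝ) (closure Ω) x := by
  obtain ⟨w, hw1, hw⟩ : ∃ w : E, ‖w‖ = 1 ∧
      ∀ v ∈ tangentConeAt ℝ (closure Ω) x, ⟪w, v⟫ = 0 := by
    have hd : ¬ Dense (Submodule.span ℝ (tangentConeAt ℝ (closure Ω) x) : Set E) := fun h =>
      hnu ⟨h, by simpa using frontier_subset_closure hx⟩
    rw [Submodule.dense_iff_topologicalClosure_eq_top, Submodule.topologicalClosure_eq_top_iff,
      Submodule.eq_bot_iff] at hd
    push Not at hd
    obtain ⟨w, hw, hw0⟩ := hd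
    refine ⟨‖w‖⁻¹ • w, by simp [norm_smul, hw0], fun v hv => ?_⟩
    rw [real_inner_smul_left, (Submodule.mem_orthogonal' _ _).1 hw v (Submodule.subset_span hv),
      mul_zero]
  have ho := isLittleO_inner_sub_of_forall_tangentConeAt hw
  rw [hasFDerivWithinAt_iff_isLittleO, Asymptotics.isLittleO_iff] at hu ⊢
  rw [Asymptotics.isLittleO_iff] at ho
  intro c hc
  set η := min (c / (4 * ‖u'‖ + 4)) (1 / 4) with hηdef
  have hη : 0 < η := by positivity
  have hη4 : η ≤ 1 / 4 := min_le_right _ _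
  have hηc : (4 * ‖u'‖ + 4) * η ≤ c := by
    have := min_le_left (c / (4 * ‖u'‖ + 4)) (1 / 4)
    rw [← hηdef, le_div_iff₀ (by positivity)] at this
    linarith
  obtain ⟨d, hd, hball⟩ := Metric.mem_nhdsWithin_iff.1 ((hu hη).and (ho hη))
  have hnear (y : E) (hy : y ∈ closure Ω) (hyd : ‖y - x‖ < d) :
      |u y - u' (y - x)| ≤ η * ‖y - x‖ ∧ |⟪w, y - x⟫| ≤ η * ‖y - x‖ := by
    simpa [hbd x hx] using hball ⟨mem_ball_iff_norm.2 hyd, hy⟩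
  filter_upwards [self_mem_nhdsWithin,
    mem_nhdsWithin_of_mem_nhds (Metric.ball_mem_nhds x (half_pos hd))] with y hy hyd
  rw [mem_ball_iff_norm] at hyd
  set r := ‖y - x‖ with hr
  have hr0 : 0 ≤ r := norm_nonneg _
  obtain ⟨z, hz, hzy⟩ : ∃ z ∈ frontier Ω, ‖z - y‖ ≤ 4 * η * r := by
    by_cases hyf : y ∈ frontier Ω
    · exact ⟨y, hyf, by simp; positivity⟩
    have hyx : y ≠ x := fun h => hyf (h ▸ hx)
    have hrpos : 0 < r := norm_pos_iff.2 (sub_ne_zero.2 hyx)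
    set y' := y + (4 * η * r) • w with hy'
    have hyy' : ‖y' - y‖ = 4 * η * r := by
      simp [hy', norm_smul, hw1, abs_of_pos hη, abs_of_nonneg hr0]
    have hyx' : ‖y' - x‖ ≤ 2 * r := by
      have := norm_add_le (y' - y) (y - x)
      rw [sub_add_sub_cancel, hyy', ← hr] at this
      nlinarith
    have hy'Ω : y' ∉ closure Ω := by
      intro hmem
      have h1 := (hnear y' hmem (by linarith)).2
      have h2 := (hnear y hy (by linarith)).2
      have h3 : ⟪w, y' - x⟫ = ⟪w, y - x⟫ + 4 * η * r := by
        have : y' - x = (y - x) + (4 * η * r) • w := by rw [hy']; abel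
        rw [this, inner_add_right, real_inner_smul_right, real_inner_self_eq_norm_sq, hw1]
        ring
      rw [h3] at h1
      have h4 := (abs_le.1 h1).2
      have h5 := (abs_le.1 h2).1
      have h6 : η * ‖y' - x‖ ≤ η * (2 * r) := mul_le_mul_of_nonneg_left hyx' hη.le
      nlinarith [mul_pos hη hrpos]
    obtain ⟨z, hzs, hzf⟩ : (segment ℝ y y' ∩ frontier Ω).Nonempty := by
      by_contra hemp
      have hyΩ : y ∈ Ω := by
        by_contra hyΩ
        exact hyf (hΩ.frontier_eq ▸ ⟨hy, hyΩ⟩)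
      have hsub := (convex_segment y y').isPreconnected.subset_left_of_subset_union hΩ
        isClosed_closure.isOpen_compl (disjoint_compl_right.mono_left subset_closure)
        (fun p hp => ?_) ⟨y, left_mem_segment ℝ y y', hyΩ⟩
      · exact hy'Ω (subset_closure (hsub (right_mem_segment ℝ y y')))
      · by_contra hp'
        rw [mem_union, mem_compl_iff, not_or, not_not] at hp'
        exact hemp ⟨p, hp, hΩ.frontier_eq ▸ ⟨hp'.2, hp'.1⟩⟩
    refine ⟨z, hzf, hyy' ▸ ?_⟩
    obtain ⟨θ, ⟨hθ0, hθ1⟩, rfl⟩ := (segment_eq_image' ℝ y y').subset hzs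
    rw [add_sub_cancel_left, norm_smul, Real.norm_of_nonneg hθ0]
    exact mul_le_of_le_one_left (norm_nonneg _) hθ1
  have hzx : ‖z - x‖ ≤ 2 * r := by
    have := norm_add_le (z - y) (y - x)
    rw [sub_add_sub_cancel, ← hr] at this
    nlinarith
  have h1 := (hnear y hy (by linarith)).1
  have h2 := (hnear z (frontier_subset_closure hz) (by linarith)).1
  rw [hbd z hz] at h2
  have h3 : |u' (y - z)| ≤ ‖u'‖ * (4 * η * r) := by
    refine (u'.le_opNorm _).trans (mul_le_mul_of_nonneg_left ?_ (norm_nonneg _))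
    rwa [norm_sub_rev]
  have h4 : u' (y - z) = u' (y - x) - u' (z - x) := by rw [← map_sub]; simp
  have h5 : η * ‖z - x‖ ≤ η * (2 * r) := mul_le_mul_of_nonneg_left hzx hη.le
  have h6 : |u y| ≤ (4 * ‖u'‖ + 4) * η * r := by
    rw [h4] at h3
    have h7 : u y = (u y - u' (y - x)) + (u' (y - x) - u' (z - x)) - (0 - u' (z - x)) := by ring
    have h8 := abs_sub ((u y - u' (y - x)) + (u' (y - x) - u' (z - x))) (0 - u' (z - x))
    have h9 := abs_add_le (u y - u' (y - x)) (u' (y - x) - u' (z - x))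
    rw [← h7] at h8
    nlinarith [mul_nonneg hη.le hr0]
  simpa [hbd x hx] using h6.trans (mul_le_mul_of_nonneg_right hηc hr0)

/-- Boundary points where the closure of an open set is uniquely differentiable are dense in the
boundary. -/
lemma frontier_subset_closure_uniqueDiffWithinAt [FiniteDimensional ℝ E] {Ω : Set E}
    (hΩ : IsOpen Ω) :
    frontier Ω ⊆ closure {z ∈ frontier Ω | UniqueDiffWithinAt ℝ (closure Ω) z} := by
  intro z hz
  rw [Metric.mem_closure_iff]
  intro d hd
  have hzΩ : z ∉ Ω := by
    rw [hΩ.frontier_eq] at hz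
    exact hz.2
  obtain ⟨y, hy, hyz⟩ := Metric.mem_closure_iff.1 (frontier_subset_closure hz) (d / 2) (half_pos hd)
  obtain ⟨z', hz', hyz'⟩ := exists_mem_frontier_infDist_compl_eq_dist hy
    (fun h => hzΩ (h ▸ mem_univ z))
  have hle : dist y z' ≤ dist y z := hyz' ▸ Metric.infDist_le_dist_of_mem hzΩ
  have hpos : 0 < dist y z' := by
    refine dist_pos.2 fun h => ?_
    rw [hΩ.frontier_eq] at hz'
    exact hz'.2 (h ▸ hy)
  have hsub : ball y (dist y z') ⊆ Ω := by
    rw [← hyz']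
    exact Metric.ball_infDist_compl_subset
  refine ⟨z', ⟨hz', UniqueDiffWithinAt.mono ?_ (hsub.trans subset_closure)⟩, ?_⟩
  · refine uniqueDiffWithinAt_convex (convex_ball _ _) ?_ ?_
    · rw [isOpen_ball.interior_eq]
      exact nonempty_ball.2 hpos
    · rw [closure_ball _ hpos.ne']
      simp [dist_comm]
  · have := dist_triangle z y z'
    rw [dist_comm z y] at this
    rw [dist_comm y z] at *
    linarith

/-- The derivative of a function that is `C¹` on the closure of an open set `Ω` has limits at
all points of the closure, and these are derivatives within the closure. -/
lemma exists_hasFDerivWithinAt_tendsto_fderiv {Ω : Set E} {u : E → ℝ} (hΩ : IsOpen Ω)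
    (hu : ContDiffOn ℝ 1 u (closure Ω)) {x : E} (hx : x ∈ closure Ω) :
    ∃ u' : E →L[ℝ] ℝ, HasFDerivWithinAt u u' (closure Ω) x ∧
      Tendsto (fderiv ℝ u) (𝓝[Ω] x) (𝓝 u') := by
  have h := hu x hx
  rw [← zero_add (1 : WithTop ℕ∞), contDiffWithinAt_succ_iff_hasFDerivWithinAt' (by simp),
    insert_eq_of_mem hx] at h
  obtain ⟨s, hs, -, -, f', hf', hc⟩ := h
  refine ⟨f' x, hf' x (mem_of_mem_nhdsWithin hx hs), ?_⟩
  refine (hc.continuousWithinAt.mono subset_closure).tendsto.congr' ?_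
  filter_upwards [self_mem_nhdsWithin, nhdsWithin_mono x subset_closure hs] with y hy hys
  exact ((hf' y hys).hasFDerivAt (mem_of_superset (hΩ.mem_nhds hy) subset_closure)).fderiv.symm

/-- Where `u` is `C²`, its gradient has symmetric derivative. -/
lemma inner_fderiv_gradient_symm [CompleteSpace E] {u : E → ℝ} {z : E} (hu : ContDiffAt ℝ 2 u z)
    (v w : E) :
    ⟪fderiv ℝ (fun y => (InnerProductSpace.toDual ℝ E).symm (fderiv ℝ u y)) z v, w⟫
      = ⟪v, fderiv ℝ (fun y => (InnerProductSpace.toDual ℝ E).symm (fderiv ℝ u y)) z w⟫ := by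
  have hd : HasFDerivAt (fderiv ℝ u) (fderiv ℝ (fderiv ℝ u) z) z :=
    ((hu.fderiv_right (m := 1) (by norm_num)).differentiableAt (by norm_num)).hasFDerivAt
  have hL : HasFDerivAt (fun y => (InnerProductSpace.toDual ℝ E).symm (fderiv ℝ u y))
      ((InnerProductSpace.toDual ℝ E).symm.toContinuousLinearEquiv.toContinuousLinearMap ∘L
        fderiv ℝ (fderiv ℝ u) z) z :=
    (InnerProductSpace.toDual ℝ E).symm.toContinuousLinearEquiv.hasFDerivAt.comp z hd
  rw [hL.fderiv, real_inner_comm _ v]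
  simpa using (hu.isSymmSndFDerivAt (by simp)).eq v w

end GradientEstimate

/-- **Uniform interior gradient estimate for the continuity-method family** `(★★)_{ε,κ}`
(flat ambient space): if `u` is smooth on the closure of `Ω`, vanishes on `∂Ω`, and
satisfies `div(∇u/√(ε² + |∇u|²)) = −κ(ε² + |∇u|²)^{−1/(2k)}` in `Ω` for some
`κ ∈ [0,1]`, then `sup_Ω |∇u| ≤ sup_{∂Ω} √(ε² + |∇u|²)`, the gradient on `∂Ω` denoting
the continuous extension of the gradient of `u`. -/
theorem interior_gradient_estimate_family (n : ℕ) (hn : 1 ≤ n) (k : ℝ) (hk : 1 ≤ k)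
    (ε : ℝ) (hε : 0 < ε) (κ : ℝ) (hκ : κ ∈ Icc (0 : ℝ) 1)
    (Ω : Set (EuclideanSpace ℝ (Fin (n + 1)))) (hΩo : IsOpen Ω)
    (hΩb : Bornology.IsBounded Ω)
    (u : EuclideanSpace ℝ (Fin (n + 1)) → ℝ)
    (hu_smooth : ContDiffOn ℝ (⊤ : ℕ∞) u (closure Ω))
    (hu_bd : ∀ x ∈ frontier Ω, u x = 0)
    (hu_pde : ∀ x ∈ Ω,
      vdiv (fun y => (Real.sqrt (ε ^ 2 + ‖gradC Ω u y‖ ^ 2))⁻¹ • gradC Ω u y) x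
        = -(κ * (ε ^ 2 + ‖gradC Ω u x‖ ^ 2) ^ (-(1 : ℝ) / (2 * k)))) :
    ∀ x ∈ Ω, ‖gradC Ω u x‖ ≤
      sSup ((fun y => Real.sqrt (ε ^ 2 + ‖gradC Ω u y‖ ^ 2)) '' frontier Ω) := by
  intro x hx
  set c : ℝ := 1 / 2 + -1 / (2 * k) with hc
  set D : EuclideanSpace ℝ (Fin (n + 1)) → EuclideanSpace ℝ (Fin (n + 1)) :=
    fun y => (InnerProductSpace.toDual ℝ _).symm (fderiv ℝ u y)
  set G : EuclideanSpace ℝ (Fin (n + 1)) → EuclideanSpace ℝ (Fin (n + 1)) := extendFrom Ω D with hG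
  have hu1 : ContDiffOn ℝ 1 u (closure Ω) := hu_smooth.of_le (by exact_mod_cast le_top)
  have hlim (z) (hz : z ∈ closure Ω) : ∃ u' : _ →L[ℝ] ℝ, HasFDerivWithinAt u u' (closure Ω) z ∧
      Tendsto D (𝓝[Ω] z) (𝓝 ((InnerProductSpace.toDual ℝ _).symm u')) := by
    obtain ⟨u', h1, h2⟩ := exists_hasFDerivWithinAt_tendsto_fderiv hΩo hu1 hz
    exact ⟨u', h1, ((InnerProductSpace.toDual ℝ _).symm.continuous.tendsto u').comp h2⟩
  have hGc : ContinuousOn G (closure Ω) := continuousOn_extendFrom subset_rfl fun z hz =>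
    (hlim z hz).imp' _ fun _ h => h.2
  have hGgrad (z) (hz : z ∈ closure Ω) (hzu : UniqueDiffWithinAt ℝ (closure Ω) z) :
      G z = gradC Ω u z := by
    obtain ⟨u', h1, h2⟩ := hlim z hz
    rw [hG, extendFrom_eq hz h2, gradC, h1.fderivWithin hzu]
  have hnhds (z) (hz : z ∈ Ω) : closure Ω ∈ 𝓝 z :=
    mem_of_superset (hΩo.mem_nhds hz) subset_closure
  have hGgradΩ (z) (hz : z ∈ Ω) : gradC Ω u z = G z :=
    (hGgrad z (subset_closure hz) (uniqueDiffWithinAt_of_mem_nhds (hnhds z hz))).symm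
  have hGD (z) (hz : z ∈ Ω) : G z = D z := by
    rw [← hGgradΩ z hz, gradC, fderivWithin_of_mem_nhds (hnhds z hz)]
  have hu3 (z) (hz : z ∈ Ω) : ContDiffAt ℝ 3 u z :=
    (hu_smooth.contDiffAt (hnhds z hz)).of_le
      (WithTop.coe_le_coe.2 (le_top : (3 : ℕ∞) ≤ ⊤))
  have hGsmooth : ContDiffOn ℝ 2 G Ω := by
    refine ContDiffOn.congr (fun z hz => ContDiffAt.contDiffWithinAt ?_) hGD
    exact (InnerProductSpace.toDual ℝ _).symm.contDiff.contDiffAt.comp z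
      ((hu3 z hz).fderiv_right (by norm_num))
  have hsymm (z) (hz : z ∈ Ω) (v w) : ⟪fderiv ℝ G z v, w⟫ = ⟪v, fderiv ℝ G z w⟫ := by
    have : G =ᶠ[𝓝 z] D := eventually_of_mem (hΩo.mem_nhds hz) hGD
    rw [this.fderiv_eq]
    exact inner_fderiv_gradient_symm ((hu3 z hz).of_le (by norm_num)) v w
  have hpde (z) (hz : z ∈ Ω) : LinearMap.trace ℝ _ (fderiv ℝ G z).toLinearMap
      = ⟪G z, fderiv ℝ G z (G z)⟫ / (ε ^ 2 + ‖G z‖ ^ 2) - κ * (ε ^ 2 + ‖G z‖ ^ 2) ^ c := by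
    have h1 := hu_pde z hz
    have hev : (fun y => (√(ε ^ 2 + ‖gradC Ω u y‖ ^ 2))⁻¹ • gradC Ω u y) =ᶠ[𝓝 z]
        fun y => (√(ε ^ 2 + ‖G y‖ ^ 2))⁻¹ • G y := by
      filter_upwards [hΩo.mem_nhds hz] with y hy
      rw [hGgradΩ y hy]
    rw [vdiv, hev.fderiv_eq, hGgradΩ z hz, trace_fderiv_normalized hε
      ((hGsmooth.contDiffAt (hΩo.mem_nhds hz)).differentiableAt (by norm_num))] at h1
    have hS : 0 < ε ^ 2 + ‖G z‖ ^ 2 := by positivity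
    rw [inv_mul_eq_iff_eq_mul₀ (Real.sqrt_pos.2 hS).ne'] at h1
    rw [hc, Real.rpow_add hS, ← Real.sqrt_eq_rpow]
    linear_combination h1
  obtain ⟨C, hC⟩ := hΩb.isCompact_closure.exists_bound_of_continuousOn hGc
  have hC0 : 0 ≤ C := (norm_nonneg _).trans (hC x (subset_closure hx))
  have hbdd : BddAbove ((fun y => √(ε ^ 2 + ‖gradC Ω u y‖ ^ 2)) '' frontier Ω) := by
    refine ⟨√(ε ^ 2 + C ^ 2), forall_mem_image.2 fun z hz => Real.sqrt_le_sqrt ?_⟩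
    have hz' := frontier_subset_closure hz
    have : ‖gradC Ω u z‖ ≤ C := by
      by_cases hzu : UniqueDiffWithinAt ℝ (closure Ω) z
      · exact hGgrad z hz' hzu ▸ hC z hz'
      · obtain ⟨u', h1, -⟩ := hlim z hz'
        have h0 := hasFDerivWithinAt_zero_of_not_uniqueDiffWithinAt hΩo hz hu_bd hzu h1
        simpa [gradC, fderivWithin, h0] using hC0
    gcongr
  have hfr (z) (hz : z ∈ frontier Ω) :
      ‖G z‖ ≤ sSup ((fun y => √(ε ^ 2 + ‖gradC Ω u y‖ ^ 2)) '' frontier Ω) := by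
    have hcl := frontier_subset_closure_uniqueDiffWithinAt hΩo hz
    have hmono : {z ∈ frontier Ω | UniqueDiffWithinAt ℝ (closure Ω) z} ⊆ closure Ω :=
      fun y hy => frontier_subset_closure hy.1
    have := mem_closure_iff_nhdsWithin_neBot.1 hcl
    refine le_of_tendsto ((hGc z (frontier_subset_closure hz)).mono hmono).norm
      (eventually_nhdsWithin_of_forall fun y hy => ?_)
    rw [hGgrad y (hmono hy) hy.2]
    refine le_trans (Real.le_sqrt_of_sq_le ?_) (le_csSup hbdd (mem_image_of_mem _ hy.1))
    nlinarith
  rw [hGgradΩ x hx]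
  rcases eq_or_ne (G x) 0 with h0 | h0
  · rw [h0, norm_zero]
    exact Real.sSup_nonneg (forall_mem_image.2 fun _ _ => Real.sqrt_nonneg _)
  have he : ‖‖G x‖⁻¹ • G x‖ = 1 := by simp [norm_smul, h0]
  have := inner_le_of_forall_frontier_inner_le_s6 hΩo hΩb hε he hGsmooth hGc hsymm hpde
    (fun z hz => ((real_inner_le_norm _ _).trans_eq (by rw [he, one_mul])).trans (hfr z hz)) hx
  rwa [real_inner_smul_left, real_inner_self_eq_norm_sq, pow_two,
    inv_mul_cancel_left₀ (norm_ne_zero_iff.2 h0)] at this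
end
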